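/- arXiv:1408.4522 — 4 statements merged into one kernel-verified Lean document; each statement's English description precedes it below -/
import Mathlib

section
/- Soft-covering lemma: Let P_{XY} be a joint probability mass function on finite alphabets 𝒳×𝒴 and let R > I(X;Y), where I(X;Y) = Σ_{x,y} P_{XY}(x,y) log₂( P_{XY}(x,y) / (P_X(x)P_Y(y)) ). For each n, let 𝒞^(n) be a random codebook consisting of 2^{nR} sequences Y^n(m) ∈ 𝒴^n, m = 1,…,2^{nR}, drawn independently of each other with each Y^n(m) distributed according to ∏_{t=1}^n P_Y(y_t), and let P_{X^n} denote the (codebook-dependent) output distribution on 𝒳^n obtained by selecting an index M uniformly at random from {1,…,2^{nR}} and passing Y^n(M) through the memoryless channel P_{X|Y}, i.e., P_{X^n}(x^n) = 2^{-nR} Σ_m ∏_{t=1}^n P_{X|Y}(x_t | Y_t(m)). Then E_{𝒞^(n)}[ ‖ P_{X^n} − ∏_{t=1}^n P_X ‖_TV ] → 0 as n → ∞. -/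
/-! Write `r(x,y) = p(x,y) / (P_X(x) P_Y(y))` and fix `τ` strictly between `I(X;Y)` and `R`.
For a threshold `T = 2^{nτ}`, split the channel as `W = W₁ + W₂`, where `W₁` keeps the pairs with
`W(a|b) ≤ T · P(a)`, `P` being the target output distribution.

* The `W₁` part of the codebook average is an average of `K` independent variables bounded by
  `T · P(a)` and of mean at most `P(a)`; its expected absolute deviation from the mean is, by
  Cauchy–Schwarz, at most the standard deviation, hence at most `P(a) √(T/K)`. Summed over `a` this
  is `√(T/K)`, and `K ≥ 2^{nR}`.
* The `W₂` part contributes at most twice the probability that `W(a|b) > T · P(a)`, i.e. that the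
  information density `∑ log r(x_t,y_t)` exceeds `n τ log 2`. A Chernoff bound makes this at most
  `φ(s)^n` with `φ(s) = ∑ p exp (s (log r - τ log 2))`. As `φ(0) = 1` and
  `φ'(0) = log 2 · (I(X;Y) - τ) < 0`, some `s > 0` has `φ(s) < 1`.

The one-shot estimate is `one_shot`, the Chernoff bound `chernoff`, and the choice of `s`
`exists_exponent`. -/

open Filter

/-- Total variation distance between two (discrete) distributions given by mass
functions, as a supremum over events: `sup_A |P(A) − Q(A)|`. -/
noncomputable def tvFin {α : Type*} [Fintype α] (f g : α → ℝ) : ℝ :=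
  ⨆ A : Finset α, |(∑ x ∈ A, f x) - ∑ x ∈ A, g x|

/-! ### Total variation -/

/-- Total variation is at most the `ℓ¹` distance. -/
lemma tvFin_le_sum_abs {α : Type*} [Fintype α] (f g : α → ℝ) :
    tvFin f g ≤ ∑ a, |f a - g a| := by
  refine ciSup_le fun A => ?_
  rw [← Finset.sum_sub_distrib]
  refine (Finset.abs_sum_le_sum_abs _ _).trans ?_
  exact Finset.sum_le_sum_of_subset_of_nonneg (Finset.subset_univ _)
    fun _ _ _ => abs_nonneg _

lemma tvFin_nonneg {α : Type*} [Fintype α] (f g : α → ℝ) : 0 ≤ tvFin f g :=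
  Real.iSup_nonneg fun _ => abs_nonneg _

/-! ### Moments of independent codewords -/

lemma sum_prod_fun {ι B : Type*} [Fintype ι] [DecidableEq ι] [Fintype B] (g : ι → B → ℝ) :
    ∑ C : ι → B, ∏ m, g m (C m) = ∏ m, ∑ b, g m b := by
  rw [Finset.prod_univ_sum, Fintype.piFinset_univ]

section Moments

variable {ι B : Type*} [Fintype ι] [DecidableEq ι] [Fintype B]

lemma moment_one (q f : B → ℝ) (hq : ∑ b, q b = 1) (k : ι) :
    ∑ C : ι → B, (∏ m, q (C m)) * f (C k) = ∑ b, q b * f b := by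
  have h : ∀ C : ι → B, (∏ m, q (C m)) * f (C k)
      = ∏ m, (q (C m) * if m = k then f (C m) else 1) := by
    intro C
    rw [Finset.prod_mul_distrib, Finset.prod_ite_eq' Finset.univ k]
    simp
  simp_rw [h]
  rw [sum_prod_fun (fun m b => q b * if m = k then f b else 1),
    Finset.prod_eq_single k]
  · simp
  · intro m _ hm
    simp [hm, hq]
  · simp

/-- Distinct codewords are uncorrelated: centred cross moments vanish. -/
lemma moment_cross (q f : B → ℝ) (hf : ∑ b, q b * f b = 0) {k l : ι} (hkl : k ≠ l) :
    ∑ C : ι → B, (∏ m, q (C m)) * (f (C k) * f (C l)) = 0 := by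
  have h : ∀ C : ι → B, (∏ m, q (C m)) * (f (C k) * f (C l))
      = ∏ m, (q (C m) * ((if m = k then f (C m) else 1) * (if m = l then f (C m) else 1))) := by
    intro C
    rw [Finset.prod_mul_distrib, Finset.prod_mul_distrib, Finset.prod_ite_eq' Finset.univ k,
      Finset.prod_ite_eq' Finset.univ l]
    simp
  simp_rw [h]
  rw [sum_prod_fun
    (fun m b => q b * ((if m = k then f b else 1) * (if m = l then f b else 1)))]
  refine Finset.prod_eq_zero (Finset.mem_univ k) ?_
  simpa [hkl] using hf

/-- The variance of a sum of independent centred variables is the sum of the variances. -/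
lemma moment_sq (q f : B → ℝ) (hq : ∑ b, q b = 1) (hf : ∑ b, q b * f b = 0) :
    ∑ C : ι → B, (∏ m, q (C m)) * (∑ m, f (C m)) ^ 2
      = Fintype.card ι * ∑ b, q b * f b ^ 2 := by
  simp_rw [sq, Finset.sum_mul_sum, Finset.mul_sum]
  rw [Finset.sum_comm]
  have h : ∀ k : ι, ∑ C : ι → B, ∑ l, (∏ m, q (C m)) * (f (C k) * f (C l))
      = ∑ b, q b * (f b * f b) := by
    intro k
    rw [Finset.sum_comm, Finset.sum_eq_single k]
    · exact moment_one q (fun b => f b * f b) hq k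
    · intro l _ hl
      exact moment_cross q f hf hl.symm
    · simp
  rw [Finset.sum_congr rfl fun k _ => h k]
  simp [Finset.mul_sum]

/-- The squared expected absolute deviation of an empirical mean is at most its variance, which is
bounded here by the second moment of one variable divided by the number of variables. -/
lemma mean_dev_sq (q g : B → ℝ) (hq0 : ∀ b, 0 ≤ q b) (hq : ∑ b, q b = 1) [Nonempty ι] :
    (∑ C : ι → B, (∏ m, q (C m)) *
        |(Fintype.card ι : ℝ)⁻¹ * ∑ m, g (C m) - ∑ b, q b * g b|) ^ 2
      ≤ (Fintype.card ι : ℝ)⁻¹ * ∑ b, q b * g b ^ 2 := by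
  set K : ℝ := (Fintype.card ι : ℝ) with hK
  have hKpos : 0 < K := by rw [hK]; exact_mod_cast Fintype.card_pos
  set μ := ∑ b, q b * g b with hμ
  have hone : ∑ C : ι → B, ∏ m, q (C m) = 1 := by
    rw [sum_prod_fun (fun _ b => q b)]; simp [hq]
  have hcent : ∑ b, q b * (g b - μ) = 0 := by
    simp_rw [mul_sub]
    rw [Finset.sum_sub_distrib, ← Finset.sum_mul, hq, one_mul, ← hμ, sub_self]
  have hvar : ∑ b, q b * (g b - μ) ^ 2 ≤ ∑ b, q b * g b ^ 2 := by
    have : ∑ b, q b * (g b - μ) ^ 2 = ∑ b, q b * g b ^ 2 - μ ^ 2 := by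
      have e : ∀ b, q b * (g b - μ) ^ 2
          = q b * g b ^ 2 - 2 * μ * (q b * g b) + μ ^ 2 * q b := fun b => by ring
      simp_rw [e]
      rw [Finset.sum_add_distrib, Finset.sum_sub_distrib, ← Finset.mul_sum, ← Finset.mul_sum, hq,
        ← hμ]
      ring
    nlinarith [sq_nonneg μ]
  have hcs := Finset.sum_sq_le_sum_mul_sum_of_sq_le_mul (Finset.univ : Finset (ι → B))
    (r := fun C => (∏ m, q (C m)) * |K⁻¹ * ∑ m, g (C m) - μ|)
    (f := fun C => ∏ m, q (C m))
    (g := fun C => (∏ m, q (C m)) * (K⁻¹ * ∑ m, g (C m) - μ) ^ 2)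
    (fun C _ => Finset.prod_nonneg fun m _ => hq0 _)
    (fun C _ => mul_nonneg (Finset.prod_nonneg fun m _ => hq0 _) (sq_nonneg _))
    (fun C _ => le_of_eq (by rw [mul_pow, sq_abs]; ring))
  rw [hone, one_mul] at hcs
  refine hcs.trans ?_
  have e : ∀ C : ι → B, (∏ m, q (C m)) * (K⁻¹ * ∑ m, g (C m) - μ) ^ 2
      = (K⁻¹) ^ 2 * ((∏ m, q (C m)) * (∑ m, (g (C m) - μ)) ^ 2) := by
    intro C
    have : K⁻¹ * ∑ m, g (C m) - μ = K⁻¹ * ∑ m, (g (C m) - μ) := by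
      rw [Finset.sum_sub_distrib]
      simp only [Finset.sum_const, Finset.card_univ, nsmul_eq_mul, ← hK]
      field_simp
    rw [this]; ring
  simp_rw [e]
  rw [← Finset.mul_sum, moment_sq q (fun b => g b - μ) hq hcent, ← hK]
  calc K⁻¹ ^ 2 * (K * ∑ b, q b * (g b - μ) ^ 2) = K⁻¹ * ∑ b, q b * (g b - μ) ^ 2 := by
        field_simp
    _ ≤ _ := mul_le_mul_of_nonneg_left hvar (by positivity)

/-- For nonnegative variables, the expected absolute deviation of an empirical mean is at most
twice the mean. -/
lemma mean_dev_le (q g : B → ℝ) (hq0 : ∀ b, 0 ≤ q b) (hq : ∑ b, q b = 1) (hg : ∀ b, 0 ≤ g b)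
    [Nonempty ι] :
    ∑ C : ι → B, (∏ m, q (C m)) *
        |(Fintype.card ι : ℝ)⁻¹ * ∑ m, g (C m) - ∑ b, q b * g b|
      ≤ 2 * ∑ b, q b * g b := by
  set K : ℝ := (Fintype.card ι : ℝ) with hK
  have hKpos : 0 < K := by rw [hK]; exact_mod_cast Fintype.card_pos
  set μ := ∑ b, q b * g b with hμ
  have hμ0 : 0 ≤ μ := Finset.sum_nonneg fun b _ => mul_nonneg (hq0 b) (hg b)
  have hone : ∑ C : ι → B, ∏ m, q (C m) = 1 := by
    rw [sum_prod_fun (fun _ b => q b)]; simp [hq]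
  have hmean : ∑ C : ι → B, (∏ m, q (C m)) * (K⁻¹ * ∑ m, g (C m)) = μ := by
    have e : ∀ C : ι → B, (∏ m, q (C m)) * (K⁻¹ * ∑ m, g (C m))
        = K⁻¹ * ∑ k, (∏ m, q (C m)) * g (C k) := by
      intro C; rw [← Finset.mul_sum]; ring
    simp_rw [e]
    rw [← Finset.mul_sum, Finset.sum_comm, Finset.sum_congr rfl fun k _ => moment_one q g hq k]
    simp only [Finset.sum_const, Finset.card_univ, nsmul_eq_mul, ← hK, ← hμ]
    field_simp
  calc _ ≤ ∑ C : ι → B, ((∏ m, q (C m)) * (K⁻¹ * ∑ m, g (C m)) + (∏ m, q (C m)) * μ) := by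
        refine Finset.sum_le_sum fun C _ => ?_
        rw [← mul_add]
        refine mul_le_mul_of_nonneg_left ?_ (Finset.prod_nonneg fun m _ => hq0 _)
        have : 0 ≤ K⁻¹ * ∑ m, g (C m) :=
          mul_nonneg (by positivity) (Finset.sum_nonneg fun m _ => hg _)
        rw [abs_le]; constructor <;> linarith
    _ = 2 * μ := by
        rw [Finset.sum_add_distrib, hmean, ← Finset.sum_mul, hone]; ring

/-! ### One-shot soft covering -/

/-- One-shot soft covering: for an input law `q`, a channel `W` with output law
`P a = ∑ b, q b * W a b`, and any threshold `T`, the expected `ℓ¹` distance between the output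
of a random codebook and `P` is at most `√(T / K)` plus twice the probability that
`W a b > T * P a`. -/
lemma one_shot {A : Type*} [Fintype A] (q : B → ℝ) (hq0 : ∀ b, 0 ≤ q b) (hq : ∑ b, q b = 1)
    (W : A → B → ℝ) (hW : ∀ a b, 0 ≤ W a b) (P : A → ℝ) (hP : ∀ a, ∑ b, q b * W a b = P a)
    (hP1 : ∑ a, P a = 1) (T : ℝ) (hT : 0 ≤ T) [Nonempty ι] :
    ∑ C : ι → B, (∏ m, q (C m)) * ∑ a, |(Fintype.card ι : ℝ)⁻¹ * ∑ m, W a (C m) - P a|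
      ≤ Real.sqrt ((Fintype.card ι : ℝ)⁻¹ * T)
        + 2 * ∑ a, ∑ b, if T * P a < W a b then q b * W a b else 0 := by
  set K : ℝ := (Fintype.card ι : ℝ) with hK
  have hKpos : 0 < K := by rw [hK]; exact_mod_cast Fintype.card_pos
  have hP0 : ∀ a, 0 ≤ P a := fun a => by
    rw [← hP a]; exact Finset.sum_nonneg fun b _ => mul_nonneg (hq0 b) (hW a b)
  have hterm : ∀ a, ∑ C : ι → B, (∏ m, q (C m)) * |K⁻¹ * ∑ m, W a (C m) - P a|
      ≤ P a * Real.sqrt (K⁻¹ * T)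
        + 2 * ∑ b, if T * P a < W a b then q b * W a b else 0 := by
    intro a
    set W₁ : B → ℝ := fun b => if T * P a < W a b then 0 else W a b with hW₁
    set W₂ : B → ℝ := fun b => if T * P a < W a b then W a b else 0 with hW₂
    have h12 : ∀ b, W a b = W₁ b + W₂ b := by
      intro b; simp only [hW₁, hW₂]; split_ifs <;> simp
    have h10 : ∀ b, 0 ≤ W₁ b := by
      intro b; simp only [hW₁]; split_ifs; exacts [le_rfl, hW a b]
    have h20 : ∀ b, 0 ≤ W₂ b := by
      intro b; simp only [hW₂]; split_ifs; exacts [hW a b, le_rfl]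
    have hPs : P a = ∑ b, q b * W₁ b + ∑ b, q b * W₂ b := by
      rw [← hP a, ← Finset.sum_add_distrib]
      exact Finset.sum_congr rfl fun b _ => by rw [h12 b]; ring
    have hsplit : ∑ C : ι → B, (∏ m, q (C m)) * |K⁻¹ * ∑ m, W a (C m) - P a|
        ≤ ∑ C : ι → B, (∏ m, q (C m)) * |K⁻¹ * ∑ m, W₁ (C m) - ∑ b, q b * W₁ b|
          + ∑ C : ι → B, (∏ m, q (C m)) * |K⁻¹ * ∑ m, W₂ (C m) - ∑ b, q b * W₂ b| := by
      rw [← Finset.sum_add_distrib]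
      refine Finset.sum_le_sum fun C _ => ?_
      rw [← mul_add]
      refine mul_le_mul_of_nonneg_left ?_ (Finset.prod_nonneg fun m _ => hq0 _)
      refine le_trans (le_of_eq ?_) (abs_add_le _ _)
      congr 1
      rw [hPs, Finset.sum_congr rfl fun m _ => h12 (C m), Finset.sum_add_distrib]
      ring
    have hfirst : ∑ C : ι → B, (∏ m, q (C m)) * |K⁻¹ * ∑ m, W₁ (C m) - ∑ b, q b * W₁ b|
        ≤ P a * Real.sqrt (K⁻¹ * T) := by
      refine abs_le_of_sq_le_sq' ?_ (by have := hP0 a; positivity) |>.2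
      rw [mul_pow, Real.sq_sqrt (by positivity)]
      refine (mean_dev_sq q W₁ hq0 hq).trans ?_
      rw [← hK]
      have h2 : ∑ b, q b * W₁ b ^ 2 ≤ T * P a * P a := by
        calc ∑ b, q b * W₁ b ^ 2 ≤ ∑ b, T * P a * (q b * W a b) := by
              refine Finset.sum_le_sum fun b _ => ?_
              have hb : W₁ b ^ 2 ≤ T * P a * W a b := by
                simp only [hW₁]
                have := hW a b
                have := hP0 a
                split_ifs with h
                · rw [zero_pow two_ne_zero]; positivity
                · rw [sq]; exact mul_le_mul_of_nonneg_right (not_lt.1 h) (hW a b)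
              nlinarith [mul_le_mul_of_nonneg_left hb (hq0 b)]
          _ = T * P a * P a := by rw [← Finset.mul_sum, hP a]
      calc K⁻¹ * ∑ b, q b * W₁ b ^ 2 ≤ K⁻¹ * (T * P a * P a) :=
            mul_le_mul_of_nonneg_left h2 (by positivity)
        _ = P a ^ 2 * (K⁻¹ * T) := by ring
    have hsecond := mean_dev_le (ι := ι) q W₂ hq0 hq h20
    have hW₂q : ∑ b, q b * W₂ b = ∑ b, if T * P a < W a b then q b * W a b else 0 :=
      Finset.sum_congr rfl fun b _ => by simp only [hW₂]; split_ifs <;> simp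
    rw [← hK] at hsecond
    rw [← hW₂q]
    linarith
  calc _ = ∑ a, ∑ C : ι → B, (∏ m, q (C m)) * |K⁻¹ * ∑ m, W a (C m) - P a| := by
        simp_rw [Finset.mul_sum]; rw [Finset.sum_comm]
    _ ≤ _ := Finset.sum_le_sum fun a _ => hterm a
    _ = _ := by
        rw [Finset.sum_add_distrib, ← Finset.sum_mul, hP1, one_mul, ← Finset.mul_sum]

end Moments

/-! ### Chernoff bound for the information density -/

/-- A negative mean makes some exponential moment smaller than one. -/
lemma exists_exponent {Z : Type*} [Fintype Z] (p L : Z → ℝ) (hp1 : ∑ z, p z = 1)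
    (hL : ∑ z, p z * L z < 0) : ∃ s > 0, ∑ z, p z * Real.exp (s * L z) < 1 := by
  have hd : HasDerivAt (fun s : ℝ => ∑ z, p z * Real.exp (s * L z)) (∑ z, p z * L z) 0 := by
    refine HasDerivAt.fun_sum fun z _ => ?_
    have h := (((hasDerivAt_id (0:ℝ)).mul_const (L z)).exp).const_mul (p z)
    simpa using h
  have hlim := (hasDerivAt_iff_tendsto_slope.1 hd).mono_left
    (nhdsWithin_mono (0:ℝ) (s := Set.Ioi 0) fun x hx => ne_of_gt hx)
  obtain ⟨s, hs, hs0⟩ := ((hlim.eventually_lt_const hL).and self_mem_nhdsWithin).exists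
  refine ⟨s, hs0, ?_⟩
  have hs0' : (0:ℝ) < s := hs0
  rw [slope_def_field, sub_zero, div_lt_iff₀ hs0'] at hs
  simp only [zero_mul, Real.exp_zero, mul_one, hp1] at hs
  linarith

/-- Chernoff bound for the information density of `n` independent uses of `p`. -/
lemma chernoff {X Y : Type*} [Fintype X] [Fintype Y] (p : X → Y → ℝ) (hp0 : ∀ x y, 0 ≤ p x y)
    (τ s : ℝ) (hs : 0 < s) (n : ℕ) :
    ∑ a : Fin n → X, ∑ b : Fin n → Y,
      (if (2:ℝ) ^ ((n:ℝ) * τ) * ∏ t, ∑ y', p (a t) y'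
          < ∏ t, (p (a t) (b t) / ∑ x', p x' (b t))
        then ∏ t, p (a t) (b t) else 0)
    ≤ (∑ z : X × Y, p z.1 z.2 * Real.exp (s *
        (Real.log (p z.1 z.2 / ((∑ y', p z.1 y') * ∑ x', p x' z.2)) - τ * Real.log 2))) ^ n := by
  set L : X × Y → ℝ := fun z =>
    Real.log (p z.1 z.2 / ((∑ y', p z.1 y') * ∑ x', p x' z.2)) - τ * Real.log 2 with hL
  have hpt : ∀ (a : Fin n → X) (b : Fin n → Y),
      (if (2:ℝ) ^ ((n:ℝ) * τ) * ∏ t, ∑ y', p (a t) y'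
          < ∏ t, (p (a t) (b t) / ∑ x', p x' (b t))
        then ∏ t, p (a t) (b t) else 0)
      ≤ ∏ t, (p (a t) (b t) * Real.exp (s * L (a t, b t))) := by
    intro a b
    have hnn : 0 ≤ ∏ t, (p (a t) (b t) * Real.exp (s * L (a t, b t))) :=
      Finset.prod_nonneg fun t _ => mul_nonneg (hp0 _ _) (Real.exp_pos _).le
    split_ifs with h
    swap
    · exact hnn
    by_cases hz : ∏ t, p (a t) (b t) = 0
    · rw [hz]; exact hnn
    have hpos : ∀ t, 0 < p (a t) (b t) := fun t =>
      lt_of_le_of_ne (hp0 _ _) fun h0 => hz (Finset.prod_eq_zero (Finset.mem_univ t) h0.symm)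
    have hX : ∀ t, 0 < ∑ y', p (a t) y' := fun t =>
      (hpos t).trans_le
        (Finset.single_le_sum (f := fun y' => p (a t) y') (fun y _ => hp0 _ y) (Finset.mem_univ _))
    have hY : ∀ t, 0 < ∑ x', p x' (b t) := fun t =>
      (hpos t).trans_le
        (Finset.single_le_sum (f := fun x' => p x' (b t)) (fun x _ => hp0 x _) (Finset.mem_univ _))
    -- Taking logarithms, the threshold condition says that the total of `L` is positive.
    have hlog := Real.log_lt_log
      (mul_pos (by positivity) (Finset.prod_pos fun t _ => hX t)) h
    rw [Real.log_mul (by positivity) (Finset.prod_pos fun t _ => hX t).ne',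
      Real.log_rpow two_pos, Real.log_prod fun t _ => (hX t).ne',
      Real.log_prod fun t _ => (div_pos (hpos t) (hY t)).ne'] at hlog
    have hsum : 0 ≤ ∑ t, L (a t, b t) := by
      have e : ∀ t, L (a t, b t) = Real.log (p (a t) (b t) / ∑ x', p x' (b t))
          - Real.log (∑ y', p (a t) y') - τ * Real.log 2 := by
        intro t
        simp only [hL]
        rw [mul_comm (∑ y', p (a t) y'), ← div_div,
          Real.log_div (div_pos (hpos t) (hY t)).ne' (hX t).ne']
      simp_rw [e]
      rw [Finset.sum_sub_distrib, Finset.sum_sub_distrib]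
      simp only [Finset.sum_const, Finset.card_univ, Fintype.card_fin, nsmul_eq_mul]
      linarith
    rw [Finset.prod_mul_distrib, ← Real.exp_sum, ← Finset.mul_sum]
    refine le_mul_of_one_le_right (Finset.prod_nonneg fun t _ => hp0 _ _) ?_
    exact Real.one_le_exp (mul_nonneg hs.le hsum)
  refine (Finset.sum_le_sum fun a _ => Finset.sum_le_sum fun b _ => hpt a b).trans
    (le_of_eq ?_)
  have h1 : ∀ a : Fin n → X, ∑ b : Fin n → Y, ∏ t, (p (a t) (b t) * Real.exp (s * L (a t, b t)))
      = ∏ t, ∑ y, p (a t) y * Real.exp (s * L (a t, y)) := fun a =>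
    sum_prod_fun (fun t y => p (a t) y * Real.exp (s * L (a t, y)))
  simp_rw [h1]
  rw [sum_prod_fun (fun (_ : Fin n) x => ∑ y, p x y * Real.exp (s * L (x, y))),
    Finset.prod_const, Finset.card_univ, Fintype.card_fin, Fintype.sum_prod_type]

/-! ### Asymptotics -/

/-- Soft-covering lemma: if `R > I(X;Y)`, then the expected total variation between
the codebook-induced output distribution on `𝒳^n` and the i.i.d. distribution
`∏ P_X` vanishes as `n → ∞`, where the expectation is over the random codebook of
`⌈2^{nR}⌉` codewords drawn i.i.d. from `∏ P_Y`. -/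
theorem stmt4 {X Y : Type} [Fintype X] [Fintype Y] [Nonempty X] [Nonempty Y]
    (p : X → Y → ℝ) (hp0 : ∀ x y, 0 ≤ p x y) (hp1 : ∑ x, ∑ y, p x y = 1)
    (R : ℝ)
    (hR : R > ∑ x, ∑ y, p x y *
      Real.logb 2 (p x y / ((∑ y', p x y') * (∑ x', p x' y)))) :
    Tendsto (fun n : ℕ =>
      ∑ C : Fin (Nat.ceil ((2:ℝ) ^ ((n:ℝ) * R))) → (Fin n → Y),
        (∏ m, ∏ t, (∑ x', p x' (C m t))) *
        tvFin
          (fun xs : Fin n → X =>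
            ((Nat.ceil ((2:ℝ) ^ ((n:ℝ) * R)) : ℝ))⁻¹ *
              ∑ m, ∏ t, (p (xs t) (C m t) / (∑ x', p x' (C m t))))
          (fun xs : Fin n → X => ∏ t, ∑ y', p (xs t) y'))
      atTop (nhds 0) := by
  classical
  set I : ℝ := ∑ x, ∑ y, p x y *
      Real.logb 2 (p x y / ((∑ y', p x y') * (∑ x', p x' y))) with hI
  set τ : ℝ := (I + R) / 2 with hτ
  have hIτ : I < τ := by rw [hτ]; linarith
  have hτR : τ < R := by rw [hτ]; linarith
  have hlog2 : 0 < Real.log 2 := Real.log_pos one_lt_two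
  have hq0 : ∀ y, 0 ≤ ∑ x', p x' y := fun y => Finset.sum_nonneg fun x _ => hp0 x y
  have hq1 : ∑ y, ∑ x', p x' y = 1 := by rw [Finset.sum_comm]; exact hp1
  obtain ⟨s, hs, hφ⟩ := exists_exponent (Z := X × Y) (fun z => p z.1 z.2)
    (fun z => Real.log (p z.1 z.2 / ((∑ y', p z.1 y') * ∑ x', p x' z.2)) - τ * Real.log 2)
    (by rw [Fintype.sum_prod_type]; exact hp1)
    (by
      have e : ∑ z : X × Y, p z.1 z.2 *
          (Real.log (p z.1 z.2 / ((∑ y', p z.1 y') * ∑ x', p x' z.2)) - τ * Real.log 2)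
          = (I - τ) * Real.log 2 := by
        simp_rw [mul_sub]
        rw [Finset.sum_sub_distrib, ← Finset.sum_mul, Fintype.sum_prod_type,
          Fintype.sum_prod_type, hp1, sub_mul, hI, Finset.sum_mul, one_mul]
        congr 1
        refine Finset.sum_congr rfl fun x _ => ?_
        rw [Finset.sum_mul]
        refine Finset.sum_congr rfl fun y _ => ?_
        rw [mul_assoc, Real.logb, div_mul_cancel₀ _ hlog2.ne']
      rw [e]
      exact mul_neg_of_neg_of_pos (by linarith) hlog2)
  set φ : ℝ := ∑ z : X × Y, p z.1 z.2 * Real.exp (s *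
    (Real.log (p z.1 z.2 / ((∑ y', p z.1 y') * ∑ x', p x' z.2)) - τ * Real.log 2)) with hφdef
  have hφ0 : 0 ≤ φ := Finset.sum_nonneg fun z _ => mul_nonneg (hp0 _ _) (Real.exp_pos _).le
  have hρ0 : (0:ℝ) ≤ (2:ℝ) ^ (τ - R) := by positivity
  have hρ1 : (2:ℝ) ^ (τ - R) < 1 := Real.rpow_lt_one_of_one_lt_of_neg one_lt_two (by linarith)
  have hlim : Tendsto (fun n : ℕ => Real.sqrt (((2:ℝ) ^ (τ - R)) ^ n) + 2 * φ ^ n)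
      atTop (nhds 0) := by
    have h1 := (tendsto_pow_atTop_nhds_zero_of_lt_one hρ0 hρ1).sqrt
    have h2 := (tendsto_pow_atTop_nhds_zero_of_lt_one hφ0 hφ).const_mul 2
    simpa using h1.add h2
  refine squeeze_zero (fun n => ?_) (fun n => ?_) hlim
  · exact Finset.sum_nonneg fun C _ => mul_nonneg
      (Finset.prod_nonneg fun m _ => Finset.prod_nonneg fun t _ => hq0 _) (tvFin_nonneg _ _)
  have hKR : (2:ℝ) ^ ((n:ℝ) * R) ≤ (Nat.ceil ((2:ℝ) ^ ((n:ℝ) * R)) : ℝ) := Nat.le_ceil _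
  have h2R : (0:ℝ) < (2:ℝ) ^ ((n:ℝ) * R) := by positivity
  generalize Nat.ceil ((2:ℝ) ^ ((n:ℝ) * R)) = K at hKR ⊢
  have hKpos : (0:ℝ) < K := h2R.trans_le hKR
  have : Nonempty (Fin K) := ⟨⟨0, by exact_mod_cast hKpos⟩⟩
  -- Where `P_Y` vanishes so does `p`, hence the value of the quotient there is irrelevant.
  have hjoint : ∀ x y, (∑ x', p x' y) * (p x y / ∑ x', p x' y) = p x y := by
    intro x y
    by_cases h : ∑ x', p x' y = 0
    · rw [h, zero_mul]
      exact ((Finset.sum_eq_zero_iff_of_nonneg fun x _ => hp0 x y).1 h x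
        (Finset.mem_univ x)).symm
    · rw [mul_div_cancel₀ _ h]
  have hjointn : ∀ (a : Fin n → X) (b : Fin n → Y),
      (∏ t, ∑ x', p x' (b t)) * ∏ t, (p (a t) (b t) / ∑ x', p x' (b t))
        = ∏ t, p (a t) (b t) := fun a b => by
    rw [← Finset.prod_mul_distrib]
    exact Finset.prod_congr rfl fun t _ => hjoint _ _
  have key := one_shot (ι := Fin K) (A := Fin n → X) (B := Fin n → Y)
    (fun b => ∏ t, ∑ x', p x' (b t))
    (fun b => Finset.prod_nonneg fun t _ => hq0 _)
    (by rw [sum_prod_fun (fun (_ : Fin n) y => ∑ x', p x' y)]; simp [hq1])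
    (fun a b => ∏ t, (p (a t) (b t) / ∑ x', p x' (b t)))
    (fun a b => Finset.prod_nonneg fun t _ => div_nonneg (hp0 _ _) (hq0 _))
    (fun a => ∏ t, ∑ y', p (a t) y')
    (fun a => by
      simp_rw [hjointn]
      exact sum_prod_fun (fun t y => p (a t) y))
    (by rw [sum_prod_fun (fun (_ : Fin n) x => ∑ y', p x y')]; simp [hp1])
    ((2:ℝ) ^ ((n:ℝ) * τ)) (by positivity)
  simp_rw [hjointn] at key
  rw [Fintype.card_fin] at key
  have hch := chernoff p hp0 τ s hs n
  rw [← hφdef] at hch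
  have hsq : Real.sqrt ((K:ℝ)⁻¹ * (2:ℝ) ^ ((n:ℝ) * τ))
      ≤ Real.sqrt (((2:ℝ) ^ (τ - R)) ^ n) := by
    refine Real.sqrt_le_sqrt ?_
    calc (K:ℝ)⁻¹ * (2:ℝ) ^ ((n:ℝ) * τ) ≤ ((2:ℝ) ^ ((n:ℝ) * R))⁻¹ * (2:ℝ) ^ ((n:ℝ) * τ) := by
          gcongr
      _ = ((2:ℝ) ^ (τ - R)) ^ n := by
          rw [← Real.rpow_neg two_pos.le, ← Real.rpow_add two_pos,
            ← Real.rpow_mul_natCast two_pos.le]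
          congr 1; ring
  refine le_trans (Finset.sum_le_sum fun C _ => mul_le_mul_of_nonneg_left (tvFin_le_sum_abs _ _)
    (Finset.prod_nonneg fun m _ => Finset.prod_nonneg fun t _ => hq0 _)) ?_
  linarith
end

section
/- Achievability part of the rate-distortion theorem (average distortion): Let P_X be a probability mass function on a finite alphabet 𝒳, let d: 𝒳×𝒴 → [0,∞) be a distortion function on finite alphabets with maximum value d_max, and let the source X^n be i.i.d. according to P_X. Suppose P̄_{Y|X} is a conditional pmf such that E_{P̄}[d(X,Y)] ≤ D, where P̄_{XY} = P_X P̄_{Y|X}, and suppose R > I_{P̄}(X;Y) = Σ_{x,y} P̄_{XY}(x,y) log₂( P̄_{XY}(x,y) / (P_X(x) P̄_Y(y)) ). Then (R,D) is achievable: there exists a sequence of (possibly stochastic) encoders f_n: 𝒳^n → ℳ_n and decoders g_n: ℳ_n → 𝒴^n with |ℳ_n| = 2^{nR} such that limsup_{n→∞} E[ d(X^n, Y^n) ] ≤ D, where Y^n = g_n(f_n(X^n)) and d(x^n,y^n) = (1/n) Σ_{t=1}^n d(x_t,y_t). -/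
open Filter

/-!
Random coding, derandomised. Codewords are drawn independently from the `n`-fold product of the
output marginal `q`, and the encoder looks for a codeword which is "good" for the source word:
the information density of the pair is below `n a`, with `I < a < R`, and its distortion is below
`n D'`, with `D < D'`. On good pairs `W^n(y|x) ≤ 2^{na} q^n(y)`, so the probability that all `M`
codewords fail for a given source word is `(1 - q^n(G))^M ≤ 1 - W^n(G|x) + exp (-M 2^{-na})`
(`one_sub_pow_le`). Averaging over source words and picking a codebook no worse than average gives
the one-shot covering bound `exists_codebook`. The probability of a bad pair under the joint law
decays exponentially by Chernoff's bound (`chernoff`), and `exp (-M 2^{-na}) → 0` since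
`M ≥ 2^{nR}` and `a < R`. Hence for every `ε > 0` all large `n` admit a deterministic code of
distortion at most `D + ε` (`exists_code`); choosing for each `n` a code of least distortion among
the finitely many deterministic ones serves all `ε` at once.
-/

/-! ### Large deviations for finite product laws -/

open Classical in
/-- Markov's inequality for `exp (l * ∑ (f - a))`, whose mean factorises over coordinates; for small
`l > 0` each factor is `< 1` since its derivative in `l` at `0` is `E f - a < 0`. -/
lemma chernoff_s10 {Z : Type} [Fintype Z] (p f : Z → ℝ) (hp : ∀ z, 0 ≤ p z) (hp1 : ∑ z, p z = 1)
    (a : ℝ) (ha : ∑ z, p z * f z < a) :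
    ∃ r : ℝ, 0 ≤ r ∧ r < 1 ∧ ∀ n : ℕ,
      ∑ z : Fin n → Z, (∏ t, p (z t)) * (if (n : ℝ) * a ≤ ∑ t, f (z t) then 1 else 0) ≤ r ^ n := by
  let φ : ℝ → ℝ := fun l => ∑ z, p z * Real.exp (l * (f z - a))
  have hφ0 : φ 0 = 1 := by simp [φ, hp1]
  have hder : HasDerivAt φ (∑ z, p z * (f z - a)) 0 := by
    have h : ∀ z ∈ (Finset.univ : Finset Z),
        HasDerivAt (fun l : ℝ => p z * Real.exp (l * (f z - a))) (p z * (f z - a)) 0 := by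
      intro z _
      have := (((hasDerivAt_id (0 : ℝ)).mul_const (f z - a)).exp).const_mul (p z)
      simpa using this
    exact HasDerivAt.fun_sum h
  have hneg : ∑ z, p z * (f z - a) < 0 := by
    have : ∑ z, p z * (f z - a) = ∑ z, p z * f z - (∑ z, p z) * a := by
      rw [Finset.sum_mul, ← Finset.sum_sub_distrib]
      exact Finset.sum_congr rfl fun z _ => by ring
    rw [this, hp1]; linarith
  obtain ⟨l, hl0, hl1⟩ : ∃ l : ℝ, 0 < l ∧ φ l < 1 := by
    have h1 := hasDerivAt_iff_tendsto_slope.1 hder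
    have h2 : ∀ᶠ l in nhdsWithin (0 : ℝ) (Set.Ioi 0), slope φ 0 l < 0 :=
      (h1.mono_left (nhdsWithin_mono _ (by intro x hx; exact ne_of_gt hx))).eventually
        (gt_mem_nhds hneg)
    obtain ⟨l, hl, hl0⟩ := (h2.and self_mem_nhdsWithin).exists
    refine ⟨l, hl0, ?_⟩
    rw [slope_def_field, hφ0, sub_zero] at hl
    have hl0' : 0 < l := hl0
    rw [div_lt_iff₀ hl0'] at hl
    linarith
  refine ⟨φ l, Finset.sum_nonneg fun z _ => mul_nonneg (hp z) (Real.exp_pos _).le, hl1, ?_⟩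
  intro n
  have hpow : φ l ^ n = ∑ z : Fin n → Z, ∏ t, p (z t) * Real.exp (l * (f (z t) - a)) := by
    have := Finset.prod_univ_sum (fun _ : Fin n => (Finset.univ : Finset Z))
      (fun _ z => p z * Real.exp (l * (f z - a)))
    simpa [φ] using this
  rw [hpow]
  refine Finset.sum_le_sum fun z _ => ?_
  rw [Finset.prod_mul_distrib]
  refine mul_le_mul_of_nonneg_left ?_ (Finset.prod_nonneg fun t _ => hp _)
  split_ifs with h
  · rw [← Real.exp_sum, Real.one_le_exp_iff, ← Finset.mul_sum, Finset.sum_sub_distrib]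
    refine mul_nonneg hl0.le ?_
    simp; linarith
  · exact Finset.prod_nonneg fun t _ => (Real.exp_pos _).le

/-! ### One-shot covering by a random codebook -/

/-- The covering estimate, by convexity of `v ↦ exp (-M v / K)` on `[0, 1]`. -/
lemma one_sub_pow_le (M : ℕ) (K s v : ℝ) (hK : 0 < K) (hs1 : s ≤ 1) (hv0 : 0 ≤ v)
    (hv1 : v ≤ 1) (h : v ≤ K * s) : (1 - s) ^ M ≤ 1 - v + Real.exp (-(M / K)) := by
  have h1 : (1 - s) ^ M ≤ Real.exp (-s) ^ M :=
    pow_le_pow_left₀ (by linarith) (Real.one_sub_le_exp_neg s) M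
  have h2 : Real.exp (-s) ^ M ≤ Real.exp (v * (-(M / K))) := by
    rw [← Real.exp_nat_mul, Real.exp_le_exp]
    have h3 : v / K ≤ s := by rw [div_le_iff₀ hK]; linarith
    have h4 := mul_le_mul_of_nonneg_left h3 (Nat.cast_nonneg (α := ℝ) M)
    have h5 : v * (-((M : ℝ) / K)) = -(M * (v / K)) := by ring
    rw [h5]; linarith
  have h3 := convexOn_exp.2 (Set.mem_univ 0) (Set.mem_univ (-((M : ℝ) / K)))
    (by linarith : 0 ≤ 1 - v) hv0 (by ring)
  simp only [smul_eq_mul, mul_zero, zero_add, Real.exp_zero, mul_one] at h3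
  have h4 := mul_le_mul_of_nonneg_right hv1 (Real.exp_pos (-((M : ℝ) / K))).le
  linarith

open Classical in
/-- One-shot covering: some codebook `c` of size `M` leaves uncovered a set of sources of
probability at most that of a pair outside `G` plus `exp (-M / K)`. The left side, averaged over
codewords drawn independently from `Q`, satisfies the bound. -/
lemma exists_codebook {A B : Type} [Fintype A] [Fintype B] (P : A → ℝ) (hP : ∀ a, 0 ≤ P a)
    (hP1 : ∑ a, P a = 1) (V : A → B → ℝ) (hV : ∀ a b, 0 ≤ V a b) (hV1 : ∀ a, ∑ b, V a b = 1)
    (Q : B → ℝ) (hQ : ∀ b, 0 ≤ Q b) (hQ1 : ∑ b, Q b = 1) (M : ℕ) (G : A → B → Prop)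
    (K : ℝ) (hK : 0 < K) (hG : ∀ a b, 0 < P a → G a b → V a b ≤ K * Q b) :
    ∃ c : Fin M → B, ∑ a, P a * (if ∃ m, G a (c m) then 0 else 1) ≤
      ∑ a, ∑ b, P a * V a b * (if G a b then 0 else 1) + Real.exp (-(M / K)) := by
  set T : ℝ := ∑ a, ∑ b, P a * V a b * (if G a b then 0 else 1) + Real.exp (-(M / K)) with hT
  let w : (Fin M → B) → ℝ := fun c => ∏ m, Q (c m)
  have hw : ∀ c, 0 ≤ w c := fun c => Finset.prod_nonneg fun m _ => hQ _
  have hw1 : ∑ c, w c = 1 := by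
    have := Finset.prod_univ_sum (fun _ : Fin M => (Finset.univ : Finset B)) (fun _ b => Q b)
    simp only [hQ1, Finset.prod_const_one, Fintype.piFinset_univ] at this
    exact this.symm
  have hcompl : ∀ (a : A) (F : B → ℝ), ∑ b, F b = 1 →
      (1 - ∑ b, F b * (if G a b then (1 : ℝ) else 0)) =
        ∑ b, F b * (if G a b then (0 : ℝ) else 1) := by
    intro a F hF
    rw [sub_eq_iff_eq_add, ← Finset.sum_add_distrib]
    refine hF.symm.trans ?_
    exact Finset.sum_congr rfl fun b _ => by split_ifs <;> ring
  have hfail : ∀ a, ∑ c, w c * (if ∃ m, G a (c m) then (0 : ℝ) else 1) =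
      (1 - ∑ b, Q b * (if G a b then 1 else 0)) ^ M := by
    intro a
    have := Finset.prod_univ_sum (fun _ : Fin M => (Finset.univ : Finset B))
      (fun _ b => Q b * (if G a b then (0 : ℝ) else 1))
    simp only [Finset.prod_const, Finset.card_univ, Fintype.card_fin,
      Fintype.piFinset_univ] at this
    rw [hcompl a Q hQ1, this]
    refine Finset.sum_congr rfl fun c _ => ?_
    rw [Finset.prod_mul_distrib]
    congr 1
    split_ifs with h
    · obtain ⟨m, hm⟩ := h
      exact (Finset.prod_eq_zero (Finset.mem_univ m) (by simp [hm])).symm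
    · push Not at h
      simp [h]
  have havg : ∑ c, w c * (∑ a, P a * (if ∃ m, G a (c m) then 0 else 1)) ≤ ∑ c, w c * T := by
    rw [← Finset.sum_mul, hw1, one_mul]
    have e : ∑ c, w c * (∑ a, P a * (if ∃ m, G a (c m) then (0 : ℝ) else 1)) =
        ∑ a, P a * (1 - ∑ b, Q b * (if G a b then 1 else 0)) ^ M := by
      simp_rw [← hfail, Finset.mul_sum]
      rw [Finset.sum_comm]
      exact Finset.sum_congr rfl fun a _ => Finset.sum_congr rfl fun c _ => by ring
    have e2 : T = ∑ a, P a * ((1 - ∑ b, V a b * (if G a b then 1 else 0)) +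
        Real.exp (-(M / K))) := by
      simp_rw [mul_add, Finset.sum_add_distrib]
      rw [← Finset.sum_mul, hP1, one_mul, hT]
      congr 1
      refine Finset.sum_congr rfl fun a _ => ?_
      rw [hcompl a (V a) (hV1 a), Finset.mul_sum]
      exact Finset.sum_congr rfl fun b _ => mul_assoc _ _ _
    rw [e, e2]
    refine Finset.sum_le_sum fun a _ => ?_
    rcases (hP a).eq_or_lt with h0 | h0
    · simp [← h0]
    refine mul_le_mul_of_nonneg_left ?_ h0.le
    have hle : ∀ F : B → ℝ, (∀ b, 0 ≤ F b) → ∑ b, F b * (if G a b then 1 else 0) ≤ ∑ b, F b :=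
      fun F hF => Finset.sum_le_sum fun b _ => by split_ifs <;> simp [hF b]
    refine one_sub_pow_le M K _ _ hK ?_ ?_ ?_ ?_
    · exact (hle Q hQ).trans_eq hQ1
    · exact Finset.sum_nonneg fun b _ => mul_nonneg (hV a b) (by split_ifs <;> simp)
    · exact (hle (V a) (hV a)).trans_eq (hV1 a)
    · rw [Finset.mul_sum]
      refine Finset.sum_le_sum fun b _ => ?_
      split_ifs with hg
      · simpa using hG a b h0 hg
      · simp
  by_contra! hcon
  have hlt : ∑ c, w c * T < ∑ c, w c * (∑ a, P a * (if ∃ m, G a (c m) then 0 else 1)) := by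
    obtain ⟨c, -, hc⟩ : ∃ c ∈ (Finset.univ : Finset (Fin M → B)), 0 < w c := by
      by_contra! h
      have := Finset.sum_nonpos h
      rw [hw1] at this
      linarith
    exact Finset.sum_lt_sum (fun c _ => mul_le_mul_of_nonneg_left (hcon c).le (hw c))
      ⟨c, Finset.mem_univ c, mul_lt_mul_of_pos_left (hcon c) hc⟩
  linarith

/-! ### Deterministic codes for long blocks -/

lemma sum_prod_eq_one {Z : Type} [Fintype Z] (n : ℕ) (p : Fin n → Z → ℝ)
    (hp1 : ∀ t, ∑ z, p t z = 1) : ∑ z : Fin n → Z, ∏ t, p t (z t) = 1 := by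
  have := Finset.prod_univ_sum (fun _ : Fin n => (Finset.univ : Finset Z)) p
  simp only [hp1, Finset.prod_const_one, Fintype.piFinset_univ] at this
  exact this.symm

/-- Expected per-letter distortion of the deterministic code with encoder `e` and codebook `c`. -/
noncomputable def codeDist {X Y : Type} [Fintype X] (pX : X → ℝ) (d : X → Y → ℝ) (n M : ℕ)
    (ec : ((Fin n → X) → Fin M) × (Fin M → Fin n → Y)) : ℝ :=
  ∑ xs : Fin n → X, (∏ t, pX (xs t)) * ((n : ℝ)⁻¹ * ∑ t, d (xs t) (ec.2 (ec.1 xs) t))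

open Classical in
/-- For every `ε > 0`, all sufficiently long blocks admit a deterministic code of rate `R` and
distortion at most `D + ε`. -/
lemma exists_code {X Y : Type} [Fintype X] [Fintype Y]
    (pX : X → ℝ) (hpX0 : ∀ x, 0 ≤ pX x) (hpX1 : ∑ x, pX x = 1)
    (d : X → Y → ℝ) (hd : ∀ x y, 0 ≤ d x y)
    (W : X → Y → ℝ) (hW0 : ∀ x y, 0 ≤ W x y) (hW1 : ∀ x, ∑ y, W x y = 1)
    (R D : ℝ)
    (hD : (∑ x, ∑ y, pX x * W x y * d x y) ≤ D)
    (hR : R > ∑ x, ∑ y, pX x * W x y *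
      Real.logb 2 ((pX x * W x y) / (pX x * (∑ x', pX x' * W x' y))))
    (ε : ℝ) (hε : 0 < ε) :
    ∀ᶠ n : ℕ in atTop, ∃ ec, codeDist pX d n (Nat.ceil ((2:ℝ) ^ ((n:ℝ) * R))) ec ≤ D + ε := by
  set q : Y → ℝ := fun y => ∑ x', pX x' * W x' y with hq
  set ι : X → Y → ℝ := fun x y => Real.logb 2 ((pX x * W x y) / (pX x * q y)) with hι
  have hq0 : ∀ y, 0 ≤ q y := fun y => Finset.sum_nonneg fun x _ => mul_nonneg (hpX0 x) (hW0 x y)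
  have hq1 : ∑ y, q y = 1 := by
    rw [hq, Finset.sum_comm]
    simp_rw [← Finset.mul_sum, hW1, mul_one]
    exact hpX1
  obtain ⟨a, haI, haR⟩ := exists_between hR
  set p : X × Y → ℝ := fun z => pX z.1 * W z.1 z.2 with hp
  have hp0 : ∀ z, 0 ≤ p z := fun z => mul_nonneg (hpX0 _) (hW0 _ _)
  have hp1 : ∑ z, p z = 1 := by
    rw [Fintype.sum_prod_type]
    simp_rw [hp, ← Finset.mul_sum, hW1, mul_one]
    exact hpX1
  obtain ⟨r₁, hr₁0, hr₁1, hr₁⟩ := chernoff_s10 p (fun z => ι z.1 z.2) hp0 hp1 a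
    (by rw [Fintype.sum_prod_type]; exact haI)
  obtain ⟨r₂, hr₂0, hr₂1, hr₂⟩ := chernoff_s10 p (fun z => d z.1 z.2) hp0 hp1 (D + ε / 2)
    (by rw [Fintype.sum_prod_type]; exact lt_of_le_of_lt hD (by linarith))
  have hD0 : 0 ≤ D := le_trans (Finset.sum_nonneg fun x _ => Finset.sum_nonneg fun y _ =>
    mul_nonneg (hp0 (x, y)) (hd x y)) hD
  set dm : ℝ := ∑ x, ∑ y, d x y with hdm
  have hdm0 : 0 ≤ dm := Finset.sum_nonneg fun x _ => Finset.sum_nonneg fun y _ => hd x y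
  have hdle : ∀ x y, d x y ≤ dm := fun x y =>
    (Finset.single_le_sum (f := fun y => d x y) (fun y _ => hd x y) (Finset.mem_univ y)).trans
      (Finset.single_le_sum (f := fun x => ∑ y, d x y)
        (fun x _ => Finset.sum_nonneg fun y _ => hd x y) (Finset.mem_univ x))
  -- On the support of the joint law, `W = q * 2 ^ ι`.
  have hWι : ∀ x y, 0 < pX x → W x y ≤ (2 : ℝ) ^ (ι x y) * q y := by
    intro x y hx
    rcases (hW0 x y).eq_or_lt with h | h
    · rw [← h]; exact mul_nonneg (by positivity) (hq0 y)
    have hqy : 0 < q y := lt_of_lt_of_le (mul_pos hx h)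
      (Finset.single_le_sum (f := fun x => pX x * W x y)
        (fun x _ => mul_nonneg (hpX0 x) (hW0 x y)) (Finset.mem_univ x))
    rw [hι]
    simp only
    rw [Real.rpow_logb (by norm_num) (by norm_num) (by positivity)]
    apply le_of_eq
    field_simp
  have hlim : Tendsto (fun n : ℕ => D + ε / 2 + dm * (r₁ ^ n + r₂ ^ n +
      Real.exp (-((2 : ℝ) ^ (R - a)) ^ n))) atTop (nhds (D + ε / 2 + dm * (0 + 0 + 0))) := by
    have h2 : Tendsto (fun n : ℕ => ((2 : ℝ) ^ (R - a)) ^ n) atTop atTop :=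
      tendsto_pow_atTop_atTop_of_one_lt (Real.one_lt_rpow (by norm_num) (by linarith))
    exact (((((tendsto_pow_atTop_nhds_zero_of_lt_one hr₁0 hr₁1).add
      (tendsto_pow_atTop_nhds_zero_of_lt_one hr₂0 hr₂1)).add
      (Real.tendsto_exp_neg_atTop_nhds_zero.comp h2)).const_mul dm).const_add _)
  have hev := hlim.eventually (gt_mem_nhds (show D + ε / 2 + dm * (0 + 0 + 0) < D + ε by
    simp; linarith))
  filter_upwards [hev, eventually_gt_atTop 0] with n hn hn0
  have hn0' : (0 : ℝ) < n := by exact_mod_cast hn0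
  set M := Nat.ceil ((2:ℝ) ^ ((n:ℝ) * R)) with hM
  have hMpos : 0 < M := Nat.ceil_pos.2 (by positivity)
  obtain ⟨G, hG⟩ : ∃ G : (Fin n → X) → (Fin n → Y) → Prop, ∀ xs ys, G xs ys ↔
      (∑ t, ι (xs t) (ys t) < n * a ∧ ∑ t, d (xs t) (ys t) < n * (D + ε / 2)) :=
    ⟨_, fun _ _ => Iff.rfl⟩
  obtain ⟨c, hc⟩ := exists_codebook (fun xs : Fin n → X => ∏ t, pX (xs t))
    (fun xs => Finset.prod_nonneg fun t _ => hpX0 _) (sum_prod_eq_one n (fun _ => pX) fun _ => hpX1)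
    (fun xs (ys : Fin n → Y) => ∏ t, W (xs t) (ys t))
    (fun xs ys => Finset.prod_nonneg fun t _ => hW0 _ _)
    (fun xs => sum_prod_eq_one n (fun t => W (xs t)) fun t => hW1 _)
    (fun ys => ∏ t, q (ys t)) (fun ys => Finset.prod_nonneg fun t _ => hq0 _)
    (sum_prod_eq_one n (fun _ => q) fun _ => hq1) M G ((2 : ℝ) ^ (n * a)) (by positivity)
    (by
      intro xs ys hx hg
      have hx' : ∀ t, 0 < pX (xs t) := fun t =>
        lt_of_le_of_ne (hpX0 _) fun h =>
          hx.ne' (Finset.prod_eq_zero (Finset.mem_univ t) h.symm)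
      calc ∏ t, W (xs t) (ys t) ≤ ∏ t, ((2 : ℝ) ^ (ι (xs t) (ys t)) * q (ys t)) :=
            Finset.prod_le_prod (fun t _ => hW0 _ _) fun t _ => hWι _ _ (hx' t)
        _ = (2 : ℝ) ^ (∑ t, ι (xs t) (ys t)) * ∏ t, q (ys t) := by
            rw [Finset.prod_mul_distrib, Real.rpow_sum_of_pos (by norm_num)]
        _ ≤ _ := by
            refine mul_le_mul_of_nonneg_right ?_ (Finset.prod_nonneg fun t _ => hq0 _)
            exact Real.rpow_le_rpow_of_exponent_le (by norm_num) ((hG _ _).1 hg).1.le)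
  have hbad : ∑ xs : Fin n → X, ∑ ys : Fin n → Y, (∏ t, pX (xs t)) * (∏ t, W (xs t) (ys t)) *
      (if G xs ys then 0 else 1) ≤ r₁ ^ n + r₂ ^ n := by
    refine le_trans ?_ (add_le_add (hr₁ n) (hr₂ n))
    rw [← Finset.sum_add_distrib, ← Fintype.sum_prod_type', ←
      Equiv.sum_comp (Equiv.arrowProdEquivProdArrow (Fin n) (fun _ => X) (fun _ => Y))]
    refine Finset.sum_le_sum fun z _ => ?_
    change (∏ t, pX (z t).1) * (∏ t, W (z t).1 (z t).2) *
      (if G (fun t => (z t).1) (fun t => (z t).2) then 0 else 1) ≤ _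
    rw [← Finset.prod_mul_distrib, ← mul_add]
    refine mul_le_mul_of_nonneg_left ?_ (Finset.prod_nonneg fun t _ => hp0 (z t))
    by_cases hg : G (fun t => (z t).1) (fun t => (z t).2)
    · rw [if_pos hg]
      split_ifs <;> norm_num
    · rw [if_neg hg]
      rcases not_and_or.1 (mt (hG _ _).2 hg) with h | h
      · rw [if_pos (not_lt.1 h)]
        split_ifs <;> norm_num
      · rw [if_pos (not_lt.1 h)]
        split_ifs <;> norm_num
  have hexp : Real.exp (-(M / (2 : ℝ) ^ (n * a))) ≤ Real.exp (-((2 : ℝ) ^ (R - a)) ^ n) := by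
    rw [Real.exp_le_exp, neg_le_neg_iff, le_div_iff₀ (by positivity), ← Real.rpow_natCast,
      ← Real.rpow_mul (by norm_num), ← Real.rpow_add (by norm_num)]
    convert Nat.le_ceil ((2:ℝ) ^ ((n:ℝ) * R)) using 2
    ring
  let e : (Fin n → X) → Fin M := fun xs =>
    if h : ∃ m, G xs (c m) then h.choose else ⟨0, hMpos⟩
  refine ⟨(e, c), ?_⟩
  have hdist : ∀ xs : Fin n → X, (n : ℝ)⁻¹ * ∑ t, d (xs t) (c (e xs) t) ≤
      D + ε / 2 + dm * (if ∃ m, G xs (c m) then 0 else 1) := by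
    intro xs
    rw [inv_mul_le_iff₀ hn0']
    by_cases h : ∃ m, G xs (c m)
    · have hg : G xs (c (e xs)) := by
        simp only [e, dif_pos h]
        exact h.choose_spec
      rw [if_pos h, mul_zero, add_zero]
      exact ((hG _ _).1 hg).2.le
    · rw [if_neg h, mul_one]
      have : ∑ t, d (xs t) (c (e xs) t) ≤ n * dm := by
        refine (Finset.sum_le_sum fun t _ => hdle _ _).trans ?_
        simp
      refine this.trans (mul_le_mul_of_nonneg_left (by linarith) hn0'.le)
  calc codeDist pX d n M (e, c)
      ≤ ∑ xs : Fin n → X, (∏ t, pX (xs t)) *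
          (D + ε / 2 + dm * (if ∃ m, G xs (c m) then 0 else 1)) :=
        Finset.sum_le_sum fun xs _ => mul_le_mul_of_nonneg_left (hdist xs)
          (Finset.prod_nonneg fun t _ => hpX0 _)
    _ = D + ε / 2 + dm * ∑ xs : Fin n → X, (∏ t, pX (xs t)) *
          (if ∃ m, G xs (c m) then 0 else 1) := by
        simp_rw [mul_add, Finset.sum_add_distrib]
        rw [← Finset.sum_mul, ← Finset.sum_mul, sum_prod_eq_one n (fun _ => pX) fun _ => hpX1,
          Finset.mul_sum]
        simp only [one_mul]
        congr 1
        exact Finset.sum_congr rfl fun xs _ => by ring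
    _ ≤ D + ε / 2 + dm * (r₁ ^ n + r₂ ^ n + Real.exp (-((2 : ℝ) ^ (R - a)) ^ n)) := by
        gcongr
        exact hc.trans (add_le_add hbad hexp)
    _ ≤ D + ε := hn.le

/-! ### Achievability -/

/-- Achievability part of the rate-distortion theorem (average distortion): if
`P̄_{Y|X} = W` satisfies `E_{P̄}[d(X,Y)] ≤ D` and `R > I_{P̄}(X;Y)`, then there is a
sequence of stochastic encoders and decoders of rate `R` (message set of size
`⌈2^{nR}⌉`) whose expected per-letter distortion has `limsup ≤ D`. -/
theorem stmt10 {X Y : Type} [Fintype X] [Fintype Y] [Nonempty X] [Nonempty Y]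
    (pX : X → ℝ) (hpX0 : ∀ x, 0 ≤ pX x) (hpX1 : ∑ x, pX x = 1)
    (d : X → Y → ℝ) (hd : ∀ x y, 0 ≤ d x y)
    (W : X → Y → ℝ) (hW0 : ∀ x y, 0 ≤ W x y) (hW1 : ∀ x, ∑ y, W x y = 1)
    (R D : ℝ)
    (hD : (∑ x, ∑ y, pX x * W x y * d x y) ≤ D)
    (hR : R > ∑ x, ∑ y, pX x * W x y *
      Real.logb 2 ((pX x * W x y) / (pX x * (∑ x', pX x' * W x' y)))) :
    ∃ (enc : (n : ℕ) → (Fin n → X) → Fin (Nat.ceil ((2:ℝ) ^ ((n:ℝ) * R))) → ℝ)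
      (dec : (n : ℕ) → Fin (Nat.ceil ((2:ℝ) ^ ((n:ℝ) * R))) → (Fin n → Y) → ℝ),
      (∀ n xs, (∀ m, 0 ≤ enc n xs m) ∧ ∑ m, enc n xs m = 1) ∧
      (∀ n m, (∀ ys, 0 ≤ dec n m ys) ∧ ∑ ys, dec n m ys = 1) ∧
      Filter.limsup (fun n : ℕ =>
        ∑ xs : Fin n → X, ∑ ys : Fin n → Y,
          (∏ t, pX (xs t)) * (∑ m, enc n xs m * dec n m ys) *
          ((n : ℝ)⁻¹ * ∑ t, d (xs t) (ys t))) atTop ≤ D := by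
  classical
  have hne : ∀ n : ℕ, Nonempty (Fin (Nat.ceil ((2:ℝ) ^ ((n:ℝ) * R)))) := fun n =>
    ⟨⟨0, Nat.ceil_pos.2 (by positivity)⟩⟩
  have hmin := fun n : ℕ => Finite.exists_min (codeDist pX d n (Nat.ceil ((2:ℝ) ^ ((n:ℝ) * R))))
  choose ec hec using hmin
  refine ⟨fun n xs m => if m = (ec n).1 xs then 1 else 0,
    fun n m ys => if ys = (ec n).2 m then 1 else 0, ?_, ?_, ?_⟩
  · intro n xs
    exact ⟨fun m => by dsimp only; split_ifs <;> norm_num, by simp⟩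
  · intro n m
    exact ⟨fun m => by dsimp only; split_ifs <;> norm_num, by simp⟩
  have hval : ∀ n : ℕ, (∑ xs : Fin n → X, ∑ ys : Fin n → Y,
      (∏ t, pX (xs t)) * (∑ m, (if m = (ec n).1 xs then (1 : ℝ) else 0) *
        (if ys = (ec n).2 m then 1 else 0)) *
      ((n : ℝ)⁻¹ * ∑ t, d (xs t) (ys t))) = codeDist pX d n _ (ec n) := by
    intro n
    refine Finset.sum_congr rfl fun xs _ => ?_
    have hys : ∀ ys : Fin n → Y, (∑ m, (if m = (ec n).1 xs then (1 : ℝ) else 0) *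
        (if ys = (ec n).2 m then 1 else 0)) = if ys = (ec n).2 ((ec n).1 xs) then 1 else 0 := by
      intro ys
      simp only [ite_mul, one_mul, zero_mul, Finset.sum_ite_eq', Finset.mem_univ, if_true]
    simp_rw [hys]
    simp
  simp_rw [hval]
  refine le_of_forall_pos_le_add fun ε hε => ?_
  refine limsup_le_of_le ?_ ?_
  -- The distortions are nonnegative, so the real `limsup` is a genuine infimum.
  · refine IsCoboundedUnder.of_frequently_ge (a := 0) (Frequently.of_forall fun n => ?_)
    exact Finset.sum_nonneg fun xs _ => mul_nonneg (Finset.prod_nonneg fun t _ => hpX0 _)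
      (mul_nonneg (by positivity) (Finset.sum_nonneg fun t _ => hd _ _))
  · filter_upwards [exists_code pX hpX0 hpX1 d hd W hW0 hW1 R D hD hR ε hε] with n ⟨ec', h⟩
    exact (hec n ec').trans h
end

section
/- Achievability part of the rate-distortion theorem under excess distortion: Let P_X be a probability mass function on a finite alphabet 𝒳, let d: 𝒳×𝒴 → [0,∞) be a distortion function on finite alphabets, and let the source X^n be i.i.d. according to P_X. Suppose P̄_{Y|X} is a conditional pmf such that E_{P̄}[d(X,Y)] < D, where P̄_{XY} = P_X P̄_{Y|X}, and suppose R > I_{P̄}(X;Y). Then there exists a sequence of (possibly stochastic) encoders f_n: 𝒳^n → ℳ_n and decoders g_n: ℳ_n → 𝒴^n with |ℳ_n| = 2^{nR} such that ℙ[ d(X^n, Y^n) > D ] → 0 as n → ∞, where Y^n = g_n(f_n(X^n)). -/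
/-!
The proof is by random coding, in a form that needs only finite sums.

For one fixed blocklength, draw the codewords independently from the output law `q` and let the
encoder pick any codeword within the allowed distortion. Averaged over codebooks, the probability
that a source word `x` is not covered is `(1 - q(G x))^M`, where `G x` is the set of good
reproductions, so some codebook does at least as well on average over `x`
(`exists_codebook`). Changing measure from `q` to the test channel `K(· | x)` on the set where
`K(y | x) ≤ s q(y)`, one gets
`(1 - q(G x))^M ≤ K(not good, or K > s q | x) + exp (-M / s)` (`uncovered_le`).

For the product source and the product channel take `s = 2 ^ (n γ)` with `I(X;Y) < γ < R`. Then
`M / s ≥ 2 ^ (n (R - γ))`, so the exponential term vanishes. The first term is at most the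
probability that the empirical distortion exceeds `D` plus the probability that the empirical
information density exceeds `γ`; both are upper tails of sums of independent variables with mean
below the threshold, and decay exponentially by Chernoff's bound (`tail_le`).
-/

open Filter

/-- The moment generating function of `f - c` has negative slope at `0` when `f` has mean below
`c`, so it drops below `1` at some positive argument. -/
lemma exists_mgf_lt_one {Z : Type} [Fintype Z] (p f : Z → ℝ) (hp1 : ∑ z, p z = 1) (c : ℝ)
    (hc : ∑ z, p z * f z < c) :
    ∃ l : ℝ, 0 < l ∧ ∑ z, p z * Real.exp (l * (f z - c)) < 1 := by
  have hder : HasDerivAt (fun l : ℝ => ∑ z, p z * Real.exp (l * (f z - c)))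
      (∑ z, p z * (f z - c)) 0 := by
    refine HasDerivAt.fun_sum fun z _ => ?_
    have h := (((hasDerivAt_id (0 : ℝ)).mul_const (f z - c)).exp).const_mul (p z)
    simpa using h
  have hneg : ∑ z, p z * (f z - c) < 0 := by
    simp only [mul_sub, Finset.sum_sub_distrib, ← Finset.sum_mul, hp1]
    linarith
  have hslope := (hasDerivAt_iff_tendsto_slope.1 hder).eventually (gt_mem_nhds hneg)
  have hright : ∀ᶠ l in nhdsWithin (0 : ℝ) (Set.Ioi 0),
      slope (fun l : ℝ => ∑ z, p z * Real.exp (l * (f z - c))) 0 l < 0 :=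
    hslope.filter_mono (nhdsWithin_mono _ fun x hx => ne_of_gt hx)
  obtain ⟨l, hl, hl0⟩ := (hright.and self_mem_nhdsWithin).exists
  have hl0 : 0 < l := hl0
  refine ⟨l, hl0, ?_⟩
  rw [slope_def_field, div_lt_iff₀ (by simpa using hl0)] at hl
  simp [hp1] at hl
  linarith

/-- Chernoff's bound: the upper tail of a sum of i.i.d. finitely valued variables, at a threshold
above the mean, decays exponentially. -/
lemma tail_le {Z : Type} [Fintype Z] (p f : Z → ℝ) (hp0 : ∀ z, 0 ≤ p z) (hp1 : ∑ z, p z = 1)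
    (c : ℝ) (hc : ∑ z, p z * f z < c) :
    ∃ r : ℝ, 0 ≤ r ∧ r < 1 ∧ ∀ n : ℕ, ∑ z : Fin n → Z, (∏ t, p (z t)) *
      (if (n : ℝ) * c ≤ ∑ t, f (z t) then 1 else 0) ≤ r ^ n := by
  obtain ⟨l, hl0, hl⟩ := exists_mgf_lt_one p f hp1 c hc
  refine ⟨_, Finset.sum_nonneg fun z _ => mul_nonneg (hp0 z) (Real.exp_pos _).le, hl,
    fun n => ?_⟩
  rw [Fintype.sum_pow]
  refine Finset.sum_le_sum fun z _ => ?_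
  rw [Finset.prod_mul_distrib, ← Real.exp_sum]
  refine mul_le_mul_of_nonneg_left ?_ (Finset.prod_nonneg fun t _ => hp0 _)
  split_ifs with h
  · apply Real.one_le_exp
    rw [← Finset.mul_sum, Finset.sum_sub_distrib]
    refine mul_nonneg hl0.le ?_
    simpa using h
  · exact (Real.exp_pos _).le

open Classical in
/-- Random coding: some codebook of size `M` leaves uncovered at most the average mass left
uncovered by `M` independent codewords of law `q`. -/
lemma exists_codebook_s11 {A B : Type} [Fintype A] [Fintype B] (p : A → ℝ) (q : B → ℝ)
    (hq0 : ∀ y, 0 ≤ q y) (hq1 : ∑ y, q y = 1) (G : A → B → Prop) (M : ℕ) :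
    ∃ c : Fin M → B, ∑ x, p x * (if ∀ m, ¬ G x (c m) then 1 else 0) ≤
      ∑ x, p x * (1 - ∑ y, q y * (if G x y then 1 else 0)) ^ M := by
  have hw1 : ∑ c : Fin M → B, ∏ m, q (c m) = 1 := by
    rw [← Fintype.sum_pow, hq1, one_pow]
  have havg : ∑ c : Fin M → B, (∏ m, q (c m)) *
      ∑ x, p x * (if ∀ m, ¬ G x (c m) then 1 else 0) =
      ∑ x, p x * (1 - ∑ y, q y * (if G x y then 1 else 0)) ^ M := by
    simp only [Finset.mul_sum]
    rw [Finset.sum_comm]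
    refine Finset.sum_congr rfl fun x _ => ?_
    have h1 : 1 - ∑ y, q y * (if G x y then 1 else 0) =
        ∑ y, q y * (if ¬ G x y then 1 else 0) := by
      rw [sub_eq_iff_eq_add, ← Finset.sum_add_distrib]
      refine hq1.symm.trans ?_
      refine Finset.sum_congr rfl fun y _ => ?_
      by_cases h : G x y <;> simp [h]
    rw [h1, Fintype.sum_pow, Finset.mul_sum]
    refine Finset.sum_congr rfl fun c _ => ?_
    rw [Finset.prod_mul_distrib, Finset.prod_boole]
    simp only [Finset.mem_univ, true_imp_iff]
    ring
  by_contra! hcon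
  -- If every codebook exceeded the average, so would the average.
  have hpos : ∃ c : Fin M → B, 0 < ∏ m, q (c m) := by
    by_contra! h
    have : ∑ c : Fin M → B, ∏ m, q (c m) ≤ 0 := Finset.sum_nonpos fun c _ => h c
    linarith
  obtain ⟨c₀, hc₀⟩ := hpos
  have : ∑ c : Fin M → B, (∏ m, q (c m)) *
      (∑ x, p x * (1 - ∑ y, q y * (if G x y then 1 else 0)) ^ M) <
      ∑ c : Fin M → B, (∏ m, q (c m)) *
      ∑ x, p x * (if ∀ m, ¬ G x (c m) then 1 else 0) :=
    Finset.sum_lt_sum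
      (fun c _ => mul_le_mul_of_nonneg_left (hcon c).le (Finset.prod_nonneg fun m _ => hq0 _))
      ⟨c₀, Finset.mem_univ _, mul_lt_mul_of_pos_left (hcon c₀) hc₀⟩
  rw [← Finset.sum_mul, hw1, one_mul, havg] at this
  exact lt_irrefl _ this

open Classical in
/-- Change of measure from the codeword law `q` to the test channel output law `k`, on the set
where `k ≤ s q`. -/
lemma uncovered_le {B : Type} [Fintype B] (q k : B → ℝ)
    (hq0 : ∀ y, 0 ≤ q y) (hq1 : ∑ y, q y = 1) (hk0 : ∀ y, 0 ≤ k y) (hk1 : ∑ y, k y = 1)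
    (G : B → Prop) (M : ℕ) (s : ℝ) (hs : 0 < s) :
    (1 - ∑ y, q y * (if G y then 1 else 0)) ^ M ≤
      ∑ y, k y * (if ¬ G y ∨ s * q y < k y then 1 else 0) + Real.exp (-(M / s)) := by
  set b := ∑ y, k y * (if G y ∧ k y ≤ s * q y then (1 : ℝ) else 0) with hb
  have hb0 : 0 ≤ b := Finset.sum_nonneg fun y _ => mul_nonneg (hk0 y) (by split_ifs <;> simp)
  have hcompl : ∑ y, k y * (if ¬ G y ∨ s * q y < k y then (1 : ℝ) else 0) = 1 - b := by
    rw [eq_sub_iff_add_eq, hb, ← Finset.sum_add_distrib]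
    refine Eq.trans ?_ hk1
    refine Finset.sum_congr rfl fun y _ => ?_
    by_cases h1 : G y <;> by_cases h2 : k y ≤ s * q y <;> simp [h1, h2, ← not_le]
  have hb1 : b ≤ 1 := by
    have : 0 ≤ 1 - b := hcompl ▸
      Finset.sum_nonneg fun y _ => mul_nonneg (hk0 y) (by split_ifs <;> simp)
    linarith
  have hqG1 : ∑ y, q y * (if G y then (1 : ℝ) else 0) ≤ 1 := by
    refine le_trans (Finset.sum_le_sum fun y _ => ?_) hq1.le
    split_ifs <;> simp [hq0 y]
  have hbq : b / s ≤ ∑ y, q y * (if G y then (1 : ℝ) else 0) := by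
    rw [div_le_iff₀ hs, hb, Finset.sum_mul]
    refine Finset.sum_le_sum fun y _ => ?_
    by_cases h1 : G y <;> by_cases h2 : k y ≤ s * q y <;> simp [h1, h2]
    · linarith
    · exact mul_nonneg (hq0 y) hs.le
  rw [hcompl]
  have hexp : 1 - ∑ y, q y * (if G y then (1 : ℝ) else 0) ≤ Real.exp (-(b / s)) := by
    linarith [Real.add_one_le_exp (-(b / s))]
  -- Convexity of the exponential along the segment from `0` to `-(M / s)`.
  have hconv : Real.exp (b * (-(M / s))) ≤ (1 - b) + b * Real.exp (-(M / s)) := by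
    have := convexOn_exp.2 (Set.mem_univ (0 : ℝ)) (Set.mem_univ (-(M / s) : ℝ))
      (sub_nonneg.2 hb1) hb0 (by ring)
    simpa using this
  calc (1 - ∑ y, q y * (if G y then (1 : ℝ) else 0)) ^ M
      ≤ Real.exp (-(b / s)) ^ M := pow_le_pow_left₀ (by linarith) hexp M
    _ = Real.exp (b * (-(M / s))) := by rw [← Real.exp_nat_mul]; congr 1; ring
    _ ≤ (1 - b) + b * Real.exp (-(M / s)) := hconv
    _ ≤ (1 - b) + Real.exp (-(M / s)) := by
        have := mul_le_of_le_one_left (Real.exp_pos (-(M / s))).le hb1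
        linarith

open Classical in
/-- One-shot lossy covering: a codebook together with an encoding map `φ` whose failure
probability is controlled by the test channel `K`. -/
lemma exists_code_s11 {A B : Type} [Fintype A] [Fintype B] (p : A → ℝ) (q : B → ℝ) (K : A → B → ℝ)
    (hp0 : ∀ x, 0 ≤ p x) (hp1 : ∑ x, p x = 1)
    (hq0 : ∀ y, 0 ≤ q y) (hq1 : ∑ y, q y = 1)
    (hK0 : ∀ x y, 0 ≤ K x y) (hK1 : ∀ x, ∑ y, K x y = 1)
    (G : A → B → Prop) (M : ℕ) (hM : 0 < M) (s : ℝ) (hs : 0 < s) :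
    ∃ (c : Fin M → B) (φ : A → Fin M),
      ∑ x, p x * (if ¬ G x (c (φ x)) then 1 else 0) ≤
        ∑ x, ∑ y, p x * K x y * (if ¬ G x y ∨ s * q y < K x y then 1 else 0) +
          Real.exp (-(M / s)) := by
  obtain ⟨c, hc⟩ := exists_codebook_s11 p q hq0 hq1 G M
  refine ⟨c, fun x => if h : ∃ m, G x (c m) then h.choose else ⟨0, hM⟩, ?_⟩
  calc _ ≤ ∑ x, p x * (if ∀ m, ¬ G x (c m) then (1 : ℝ) else 0) := by
        refine Finset.sum_le_sum fun x _ => mul_le_mul_of_nonneg_left ?_ (hp0 x)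
        by_cases h : ∃ m, G x (c m)
        · have h' := h.choose_spec
          simp only [dif_pos h, if_neg (not_not.2 h')]
          split_ifs <;> simp
        · rw [if_pos (not_exists.1 h)]
          split_ifs <;> simp
    _ ≤ _ := hc
    _ ≤ ∑ x, p x * (∑ y, K x y * (if ¬ G x y ∨ s * q y < K x y then 1 else 0) +
          Real.exp (-(M / s))) :=
        Finset.sum_le_sum fun x _ => mul_le_mul_of_nonneg_left
          (uncovered_le q (K x) hq0 hq1 (hK0 x) (hK1 x) (G x) M s hs) (hp0 x)
    _ = _ := by
        simp only [mul_add, Finset.sum_add_distrib, ← Finset.sum_mul, hp1, one_mul,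
          Finset.mul_sum, mul_assoc]

/-- On a pair of words of positive probability, a likelihood ratio above `2 ^ (n γ)` means that
the information densities of the letters add up to at least `n γ`. -/
lemma density_le {X Y : Type} {n : ℕ} (p : X → ℝ) (W : X → Y → ℝ) (q : Y → ℝ)
    (hp0 : ∀ x, 0 ≤ p x) (hW0 : ∀ x y, 0 ≤ W x y)
    (hq : ∀ x y, 0 < p x * W x y → 0 < q y) (xs : Fin n → X) (ys : Fin n → Y)
    (hpos : 0 < (∏ t, p (xs t)) * ∏ t, W (xs t) (ys t)) (g : ℝ)
    (h : (2 : ℝ) ^ ((n : ℝ) * g) * ∏ t, q (ys t) < ∏ t, W (xs t) (ys t)) :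
    (n : ℝ) * g ≤ ∑ t, Real.logb 2 ((p (xs t) * W (xs t) (ys t)) / (p (xs t) * q (ys t))) := by
  have hpW : ∀ t, 0 < p (xs t) * W (xs t) (ys t) := by
    intro t
    refine lt_of_le_of_ne (mul_nonneg (hp0 _) (hW0 _ _)) fun h0 => hpos.ne' ?_
    rw [← Finset.prod_mul_distrib]
    exact Finset.prod_eq_zero (Finset.mem_univ t) h0.symm
  have hp : ∀ t, p (xs t) ≠ 0 := fun t h0 => (hpW t).ne' (by rw [h0, zero_mul])
  have hW : ∀ t, W (xs t) (ys t) ≠ 0 := fun t h0 => (hpW t).ne' (by rw [h0, mul_zero])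
  have hqt : ∀ t, 0 < q (ys t) := fun t => hq _ _ (hpW t)
  have hQ : 0 < ∏ t, q (ys t) := Finset.prod_pos fun t _ => hqt t
  have heq : ∑ t, Real.logb 2 ((p (xs t) * W (xs t) (ys t)) / (p (xs t) * q (ys t))) =
      Real.logb 2 ((∏ t, W (xs t) (ys t)) / ∏ t, q (ys t)) := by
    rw [← Finset.prod_div_distrib, Real.logb_prod]
    · exact Finset.sum_congr rfl fun t _ => by rw [mul_div_mul_left _ _ (hp t)]
    · exact fun t _ => div_ne_zero (hW t) (hqt t).ne'
  rw [heq, Real.le_logb_iff_rpow_le (by norm_num), le_div_iff₀ hQ]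
  · exact h.le
  · exact div_pos (lt_of_le_of_lt (by positivity) h) hQ

/-- `tail_le` for i.i.d. pairs, with the two words summed separately. -/
lemma tail_pair_le {X Y : Type} [Fintype X] [Fintype Y] (p : X → ℝ) (W f : X → Y → ℝ)
    (hp0 : ∀ x, 0 ≤ p x) (hp1 : ∑ x, p x = 1)
    (hW0 : ∀ x y, 0 ≤ W x y) (hW1 : ∀ x, ∑ y, W x y = 1)
    (c : ℝ) (hc : ∑ x, ∑ y, p x * W x y * f x y < c) :
    ∃ r : ℝ, 0 ≤ r ∧ r < 1 ∧ ∀ n : ℕ, ∑ xs : Fin n → X, ∑ ys : Fin n → Y,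
      (∏ t, p (xs t)) * (∏ t, W (xs t) (ys t)) *
      (if (n : ℝ) * c ≤ ∑ t, f (xs t) (ys t) then 1 else 0) ≤ r ^ n := by
  obtain ⟨r, hr0, hr1, hr⟩ := tail_le (fun z : X × Y => p z.1 * W z.1 z.2) (fun z => f z.1 z.2)
    (fun z => mul_nonneg (hp0 _) (hW0 _ _))
    (by simp [Fintype.sum_prod_type, ← Finset.mul_sum, hW1, hp1]) c
    (by simpa [Fintype.sum_prod_type] using hc)
  refine ⟨r, hr0, hr1, fun n => le_trans (le_of_eq ?_) (hr n)⟩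
  rw [← Fintype.sum_prod_type']
  refine (Fintype.sum_equiv (Equiv.arrowProdEquivProdArrow (Fin n) (fun _ => X) (fun _ => Y))
    _ _ fun z => ?_).symm
  simp only [Equiv.arrowProdEquivProdArrow, Equiv.coe_fn_mk, Finset.prod_mul_distrib]
  rfl


/-- Achievability part of the rate-distortion theorem under excess distortion: if
`P̄_{Y|X} = W` satisfies `E_{P̄}[d(X,Y)] < D` and `R > I_{P̄}(X;Y)`, then there is a
sequence of stochastic encoders and decoders of rate `R` (message set of size
`⌈2^{nR}⌉`) such that `ℙ[d(X^n,Y^n) > D] → 0` as `n → ∞`. -/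
theorem stmt11 {X Y : Type} [Fintype X] [Fintype Y] [Nonempty X] [Nonempty Y]
    (pX : X → ℝ) (hpX0 : ∀ x, 0 ≤ pX x) (hpX1 : ∑ x, pX x = 1)
    (d : X → Y → ℝ) (hd : ∀ x y, 0 ≤ d x y)
    (W : X → Y → ℝ) (hW0 : ∀ x y, 0 ≤ W x y) (hW1 : ∀ x, ∑ y, W x y = 1)
    (R D : ℝ)
    (hD : (∑ x, ∑ y, pX x * W x y * d x y) < D)
    (hR : R > ∑ x, ∑ y, pX x * W x y *
      Real.logb 2 ((pX x * W x y) / (pX x * (∑ x', pX x' * W x' y)))) :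
    ∃ (enc : (n : ℕ) → (Fin n → X) → Fin (Nat.ceil ((2:ℝ) ^ ((n:ℝ) * R))) → ℝ)
      (dec : (n : ℕ) → Fin (Nat.ceil ((2:ℝ) ^ ((n:ℝ) * R))) → (Fin n → Y) → ℝ),
      (∀ n xs, (∀ m, 0 ≤ enc n xs m) ∧ ∑ m, enc n xs m = 1) ∧
      (∀ n m, (∀ ys, 0 ≤ dec n m ys) ∧ ∑ ys, dec n m ys = 1) ∧
      Tendsto (fun n : ℕ =>
        ∑ xs : Fin n → X, ∑ ys : Fin n → Y,
          (∏ t, pX (xs t)) * (∑ m, enc n xs m * dec n m ys) *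
          (if D < (n : ℝ)⁻¹ * ∑ t, d (xs t) (ys t) then 1 else 0))
        atTop (nhds 0) := by
  classical
  set q : Y → ℝ := fun y => ∑ x', pX x' * W x' y with hqdef
  have hq0 : ∀ y, 0 ≤ q y := fun y => Finset.sum_nonneg fun x _ => mul_nonneg (hpX0 x) (hW0 x y)
  have hq1 : ∑ y, q y = 1 := by
    rw [hqdef, Finset.sum_comm]
    simp [← Finset.mul_sum, hW1, hpX1]
  have hqpos : ∀ x y, 0 < pX x * W x y → 0 < q y := fun x y h =>
    h.trans_le (Finset.single_le_sum (f := fun x' => pX x' * W x' y)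
      (fun x' _ => mul_nonneg (hpX0 x') (hW0 x' y)) (Finset.mem_univ x))
  obtain ⟨g, hIg, hgR⟩ := exists_between hR
  obtain ⟨r₁, hr₁0, hr₁1, hr₁⟩ := tail_pair_le pX W d hpX0 hpX1 hW0 hW1 D hD
  obtain ⟨r₂, hr₂0, hr₂1, hr₂⟩ := tail_pair_le pX W _ hpX0 hpX1 hW0 hW1 g hIg
  have hMpos : ∀ n : ℕ, 0 < Nat.ceil ((2 : ℝ) ^ ((n : ℝ) * R)) := fun n =>
    Nat.ceil_pos.2 (by positivity)
  have hpow : ∀ {Z : Type} [Fintype Z] (n : ℕ) (w : Fin n → Z → ℝ), (∀ t, ∑ z, w t z = 1) →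
      ∑ zs : Fin n → Z, ∏ t, w t (zs t) = 1 := by
    intro Z _ n w hw
    rw [← Fintype.prod_sum]
    simp [hw]
  have hcode : ∀ n : ℕ, ∃ (c : Fin (Nat.ceil ((2 : ℝ) ^ ((n : ℝ) * R))) → Fin n → Y)
      (φ : (Fin n → X) → Fin (Nat.ceil ((2 : ℝ) ^ ((n : ℝ) * R)))),
      ∑ xs : Fin n → X, (∏ t, pX (xs t)) *
        (if D < (n : ℝ)⁻¹ * ∑ t, d (xs t) (c (φ xs) t) then 1 else 0) ≤
      r₁ ^ n + r₂ ^ n + Real.exp (-((2 : ℝ) ^ (R - g)) ^ n) := by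
    intro n
    obtain ⟨c, φ, h⟩ := exists_code_s11 (fun xs : Fin n → X => ∏ t, pX (xs t))
      (fun ys : Fin n → Y => ∏ t, q (ys t)) (fun xs ys => ∏ t, W (xs t) (ys t))
      (fun xs => Finset.prod_nonneg fun t _ => hpX0 _) (hpow n (fun _ => pX) fun _ => hpX1)
      (fun ys => Finset.prod_nonneg fun t _ => hq0 _) (hpow n (fun _ => q) fun _ => hq1)
      (fun xs ys => Finset.prod_nonneg fun t _ => hW0 _ _)
      (fun xs => hpow n (fun t => W (xs t)) fun t => hW1 _)
      (fun xs ys => ¬ D < (n : ℝ)⁻¹ * ∑ t, d (xs t) (ys t))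
      _ (hMpos n) ((2 : ℝ) ^ ((n : ℝ) * g)) (by positivity)
    refine ⟨c, φ, ?_⟩
    simp only [not_not] at h
    refine h.trans (add_le_add ?_ (Real.exp_le_exp.2 (neg_le_neg ?_)))
    · refine le_trans ?_ (add_le_add (hr₁ n) (hr₂ n))
      simp only [← Finset.sum_add_distrib]
      refine Finset.sum_le_sum fun xs _ => Finset.sum_le_sum fun ys _ => ?_
      have hnn : 0 ≤ (∏ t, pX (xs t)) * ∏ t, W (xs t) (ys t) :=
        mul_nonneg (Finset.prod_nonneg fun t _ => hpX0 _) (Finset.prod_nonneg fun t _ => hW0 _ _)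
      rcases hnn.eq_or_lt with h0 | hpos
      · simp [← h0]
      rw [← mul_add]
      refine mul_le_mul_of_nonneg_left ?_ hnn
      have hind : ∀ P : Prop, ∀ [Decidable P], (0 : ℝ) ≤ if P then 1 else 0 := by
        intro P _
        split_ifs <;> simp
      by_cases hor : D < (n : ℝ)⁻¹ * ∑ t, d (xs t) (ys t) ∨
          (2 : ℝ) ^ ((n : ℝ) * g) * ∏ t, q (ys t) < ∏ t, W (xs t) (ys t)
      · rw [if_pos hor]
        rcases hor with hdist | hdens
        · have hle : (n : ℝ) * D ≤ ∑ t, d (xs t) (ys t) := by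
            -- For `n = 0` both sides vanish, whatever `0⁻¹` means.
            rcases Nat.eq_zero_or_pos n with rfl | hn
            · simp
            · have hn' : (0 : ℝ) < n := Nat.cast_pos.2 hn
              rw [inv_mul_eq_div, lt_div_iff₀ hn'] at hdist
              linarith
          rw [if_pos hle]
          exact le_add_of_nonneg_right (hind _)
        · rw [if_pos (density_le pX W q hpX0 hW0 hqpos xs ys hpos g hdens)]
          exact le_add_of_nonneg_left (hind _)
      · rw [if_neg hor]
        exact add_nonneg (hind _) (hind _)
    · rw [le_div_iff₀ (by positivity), ← Real.rpow_natCast, ← Real.rpow_mul (by norm_num),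
        ← Real.rpow_add (by norm_num)]
      refine le_trans (le_of_eq ?_) (Nat.le_ceil _)
      congr 1
      ring
  choose c φ hcφ using hcode
  refine ⟨fun n xs m => if m = φ n xs then 1 else 0, fun n m ys => if ys = c n m then 1 else 0,
    fun n xs => ⟨fun m => by positivity, by simp⟩,
    fun n m => ⟨fun ys => by positivity, by simp⟩, ?_⟩
  have hlim : Tendsto (fun n : ℕ => r₁ ^ n + r₂ ^ n + Real.exp (-((2 : ℝ) ^ (R - g)) ^ n))
      atTop (nhds 0) := by
    have h3 : Tendsto (fun n : ℕ => Real.exp (-((2 : ℝ) ^ (R - g)) ^ n)) atTop (nhds 0) :=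
      Real.tendsto_exp_neg_atTop_nhds_zero.comp (tendsto_pow_atTop_atTop_of_one_lt
        (Real.one_lt_rpow (by norm_num) (sub_pos.2 hgR)))
    simpa using ((tendsto_pow_atTop_nhds_zero_of_lt_one hr₁0 hr₁1).add
      (tendsto_pow_atTop_nhds_zero_of_lt_one hr₂0 hr₂1)).add h3
  refine squeeze_zero (fun n => ?_) (fun n => le_trans (le_of_eq ?_) (hcφ n)) hlim
  · refine Finset.sum_nonneg fun xs _ => Finset.sum_nonneg fun ys _ => ?_
    have h1 : 0 ≤ ∏ t, pX (xs t) := Finset.prod_nonneg fun t _ => hpX0 _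
    positivity
  · refine Finset.sum_congr rfl fun xs _ => ?_
    have hmsg : ∀ ys : Fin n → Y, ∑ m, (if m = φ n xs then (1 : ℝ) else 0) *
        (if ys = c n m then 1 else 0) = if ys = c n (φ n xs) then 1 else 0 := by
      intro ys
      simp only [ite_mul, one_mul, zero_mul, Finset.sum_ite_eq', Finset.mem_univ, if_true]
    simp only [hmsg]
    rw [Finset.sum_eq_single (c n (φ n xs))]
    · simp
    · intro ys _ hne
      simp [hne]
    · simp
end

section
/- Achievability part of the Wyner-Ziv theorem: Let P_{XZ} be a joint probability mass function on finite alphabets 𝒳×𝒵 and let the source and side-information pair (X^n, Z^n) be i.i.d. according to P_{XZ}; let d: 𝒳×𝒴 → [0,∞) be a distortion function with 𝒴 finite. Suppose P̄_{V|X} is a conditional pmf from 𝒳 to a finite alphabet 𝒱 (so that V − X − Z is a Markov chain under P̄_{XZV} = P_{XZ} P̄_{V|X}), and φ: 𝒱×𝒵 → 𝒴 is a function such that E_{P̄}[ d(X, φ(V,Z)) ] ≤ D. If R > I_{P̄}(X;V|Z), then (R,D) is achievable with side information at the decoder: there exists a sequence of (possibly stochastic) encoders f_n: 𝒳^n → ℳ_n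 and decoders g_n: ℳ_n × 𝒵^n → 𝒴^n with |ℳ_n| = 2^{nR} such that limsup_{n→∞} E[ d(X^n, Y^n) ] ≤ D, where Y^n = g_n(f_n(X^n), Z^n). -/
open Filter

/-!
The code is built from exponential races in place of typicality arguments. Attach an independent
standard exponential clock `T w` to every element `w` of a finite set; for a pmf `p` the winner of
the race, the minimiser of `T w / p w`, has law exactly `p` (`race_real_wins`). If a second race
with speeds `q` is run on the same clocks, both races select `w` with probability at least
`p w * q w / (p w + q w)` (`le_race_real_wins_inter`). This is the Poisson matching lemma of Li and
Anantharam, on a finite set.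

For one-shot Wyner–Ziv coding (`oneshot`) the candidates are pairs `(u, m)` of an auxiliary symbol
and one of `L` messages. Given `x`, the encoder races with speeds `W(u|x) / L` and sends the label
of the winner; the decoder, given `z` and `m`, races with speeds `Q(u|z)` among the candidates
labelled `m`. The encoder's symbol has law `W(·|x)` exactly, so the distortion is its single-letter
value up to `max d` times the probability that the decoder's symbol differs from the encoder's,
and that probability is at most `E[W / (W + L * Q)]`. The clocks are common randomness, removed by
fixing a realisation that is no worse than average.

For i.i.d. blocks take `Q = P_{V|Z}`. Since `r / (1 + r) ≤ r ^ s` for `0 < s ≤ 1`, the error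
probability is at most the `n`-th power of `θ(s) = E[(W / (2 ^ R * Q)) ^ s]` (`error_le`). Here
`θ(0) = 1` and `θ'(0) = (I(X;V|Z) - R) * log 2 < 0`, so `θ(s) < 1` for some small `s`
(`exists_exp_sum_lt_one`) and the error decays geometrically.
-/

namespace WynerZiv
open MeasureTheory ProbabilityTheory

/-! ### Exponential races -/

/-- The race measure: independent standard exponential clocks, one for each `w : Ω`. -/
noncomputable def race (Ω : Type*) [Fintype Ω] : Measure (Ω → ℝ) :=
  Measure.pi fun _ => expMeasure 1

instance : IsProbabilityMeasure (expMeasure 1) := isProbabilityMeasure_expMeasure one_pos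

instance (Ω : Type*) [Fintype Ω] : IsProbabilityMeasure (race Ω) := by
  unfold race; infer_instance

lemma expMeasure_Ioi {t : ℝ} (ht : 0 ≤ t) :
    expMeasure 1 (Set.Ioi t) = ENNReal.ofReal (Real.exp (-t)) := by
  have h := cdf_expMeasure_eq one_pos t
  rw [cdf_eq_real, if_pos ht, one_mul] at h
  rw [← Set.compl_Iic, ← ofReal_measureReal, probReal_compl_eq_one_sub measurableSet_Iic, h]
  congr 1; ring

/-- The Laplace transform of the standard exponential law, written with an indicator because the
tail formula `expMeasure_Ioi` is only available at positive times. -/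
lemma lintegral_exp_weight {r : ℝ} (hr : 0 ≤ r) :
    ∫⁻ t, (Set.Ioi (0:ℝ)).indicator (fun t => ENNReal.ofReal (Real.exp (-(r * t)))) t
      ∂(expMeasure 1) = ENNReal.ofReal (1 + r)⁻¹ := by
  have hm : Measurable (fun t => (Set.Ioi (0:ℝ)).indicator
      (fun t => ENNReal.ofReal (Real.exp (-(r * t)))) t) :=
    (by fun_prop : Measurable fun t : ℝ => ENNReal.ofReal (Real.exp (-(r * t)))).indicator
      measurableSet_Ioi
  have hpdf : Measurable (gammaPDF 1 1) := (measurable_gammaPDFReal 1 1).ennreal_ofReal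
  unfold expMeasure gammaMeasure
  rw [lintegral_withDensity_eq_lintegral_mul _ hpdf hm]
  have : (gammaPDF 1 1 * fun t => (Set.Ioi (0:ℝ)).indicator
      (fun t => ENNReal.ofReal (Real.exp (-(r * t)))) t) =
      (Set.Ioi (0:ℝ)).indicator (fun t => ENNReal.ofReal (Real.exp (-(1 + r) * t))) := by
    ext t
    simp only [Pi.mul_apply, Set.indicator_apply, Set.mem_Ioi]
    split_ifs with ht
    · change exponentialPDF 1 t * _ = _
      rw [exponentialPDF_of_nonneg ht.le, ← ENNReal.ofReal_mul (by positivity), one_mul, one_mul,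
        ← Real.exp_add]
      congr 2; ring
    · simp
  rw [this, lintegral_indicator measurableSet_Ioi, ← ofReal_integral_eq_lintegral_ofReal,
    integral_exp_mul_Ioi (by linarith)]
  · rw [mul_zero, Real.exp_zero, neg_div_neg_eq, one_div]
  · exact integrableOn_exp_mul_Ioi (by linarith) 0
  · exact Eventually.of_forall fun _ => (Real.exp_pos _).le

variable {Ω : Type*}

/-- The event that `w` is the strict winner of the exponential race in which clock `u` runs at
speed `p u`, that is, `T w / p w < T u / p u` for all `u ≠ w`. The inequality is cross-multiplied so
that a clock of speed `0` never rings. -/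
def Wins (p : Ω → ℝ) (w : Ω) : Set (Ω → ℝ) :=
  {T | 0 < p w ∧ 0 < T w ∧ ∀ u, u ≠ w → T w * p u < T u * p w}

lemma Wins.unique {p : Ω → ℝ} {w w' : Ω} {T : Ω → ℝ} (h : T ∈ Wins p w) (h' : T ∈ Wins p w') :
    w = w' := by
  by_contra hne
  have h1 := h.2.2 w' (Ne.symm hne)
  have h2 := h'.2.2 w hne
  linarith

variable [Fintype Ω]

lemma measurableSet_wins (p : Ω → ℝ) (w : Ω) : MeasurableSet (Wins p w) := by
  refine (MeasurableSet.const (0 < p w)).inter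
    ((measurableSet_lt measurable_const (measurable_pi_apply w)).inter ?_)
  change MeasurableSet {T : Ω → ℝ | ∀ u, u ≠ w → T w * p u < T u * p w}
  simp_rw [Set.ofPred_forall]
  exact MeasurableSet.iInter fun i => MeasurableSet.iInter fun _ =>
    measurableSet_lt (by fun_prop) (by fun_prop)

variable [DecidableEq Ω]

/-- Separates the clock of `w` from all the others. -/
lemma measurePreserving_split (w : Ω) :
    MeasurePreserving (fun T : Ω → ℝ => (T w, fun i : {u // ¬ u = w} => T i)) (race Ω)
      ((expMeasure 1).prod (Measure.pi fun _ : {u // ¬ u = w} => expMeasure 1)) := by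
  have h1 := measurePreserving_piEquivPiSubtypeProd (fun _ : Ω => expMeasure 1) (fun u => u = w)
  have h2 : MeasurePreserving (MeasurableEquiv.funUnique {u // u = w} ℝ)
      (@Measure.pi _ _ (Subtype.fintype fun u => u = w) _ fun _ => expMeasure 1)
      (expMeasure 1) := by
    convert! measurePreserving_funUnique (expMeasure 1) {u // u = w}
  exact (h2.prod (MeasurePreserving.id _)).comp h1

/-- A standard exponential clock `w` wins against clocks of relative rates `c u` with probability
`1 / (1 + ∑ c u)`. -/
lemma race_real_first (w : Ω) (c : Ω → ℝ) (hc : ∀ u, 0 ≤ c u) :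
    (race Ω).real {T | 0 < T w ∧ ∀ u, u ≠ w → c u * T w < T u} =
      (1 + ∑ u : {u // ¬ u = w}, c u)⁻¹ := by
  set E : Set (ℝ × ({u // ¬ u = w} → ℝ)) :=
    {a | 0 < a.1 ∧ ∀ i : {u // ¬ u = w}, c i * a.1 < a.2 i} with hE
  have hEm : MeasurableSet E := by
    refine (measurableSet_lt measurable_const measurable_fst).inter ?_
    change MeasurableSet {a : ℝ × ({u // ¬ u = w} → ℝ) | ∀ i : {u // ¬ u = w}, c i * a.1 < a.2 i}
    rw [Set.ofPred_forall]
    exact MeasurableSet.iInter fun i => measurableSet_lt (by fun_prop) (by fun_prop)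
  have hpre : {T : Ω → ℝ | 0 < T w ∧ ∀ u, u ≠ w → c u * T w < T u} =
      (fun T : Ω → ℝ => (T w, fun i : {u // ¬ u = w} => T i)) ⁻¹' E := by
    ext T; simp [hE]
  have hr : 0 ≤ ∑ u : {u // ¬ u = w}, c u := Finset.sum_nonneg fun i _ => hc i
  rw [measureReal_def, hpre, (measurePreserving_split w).measure_preimage hEm.nullMeasurableSet,
    Measure.prod_apply hEm]
  -- given that clock `w` rings at time `t > 0`, the other clocks are independent
  have hsec : ∀ t : ℝ, (Measure.pi fun _ : {u // ¬ u = w} => expMeasure 1) (Prod.mk t ⁻¹' E) =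
      (Set.Ioi (0:ℝ)).indicator
        (fun t => ENNReal.ofReal (Real.exp (-((∑ u : {u // ¬ u = w}, c u) * t)))) t := by
    intro t
    by_cases ht : 0 < t
    · have : Prod.mk t ⁻¹' E = Set.univ.pi fun i : {u // ¬ u = w} => Set.Ioi (c i * t) := by
        ext b; simp [hE, ht]
      rw [this, Measure.pi_pi, Set.indicator_of_mem (show t ∈ Set.Ioi 0 from ht)]
      simp_rw [fun i : {u // ¬ u = w} => expMeasure_Ioi (mul_nonneg (hc i) ht.le)]
      rw [← ENNReal.ofReal_prod_of_nonneg fun _ _ => (Real.exp_pos _).le, ← Real.exp_sum,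
        Finset.sum_neg_distrib, Finset.sum_mul]
    · have : Prod.mk t ⁻¹' E = ∅ := by
        ext b; simp [hE, ht]
      rw [this, measure_empty, Set.indicator_of_notMem (by simpa using ht)]
  simp_rw [hsec]
  rw [lintegral_exp_weight hr, ENNReal.toReal_ofReal (by positivity)]

lemma sum_ne_eq (w : Ω) (f : Ω → ℝ) : ∑ u : {u // ¬ u = w}, f u = ∑ u, f u - f w := by
  rw [← Finset.sum_erase_eq_sub (Finset.mem_univ w)]
  exact (Finset.sum_subtype (Finset.univ.erase w) (by simp) f).symm

/-- The winner of a race with speeds `p` has law `p`. -/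
lemma race_real_wins {p : Ω → ℝ} (hp : ∀ u, 0 ≤ p u) (hp1 : ∑ u, p u = 1) (w : Ω) :
    (race Ω).real (Wins p w) = p w := by
  rcases (hp w).eq_or_lt with h0 | h0
  · have : Wins p w = ∅ := by ext T; simp [Wins, ← h0]
    rw [this, measureReal_empty, h0]
  · have : Wins p w = {T | 0 < T w ∧ ∀ u, u ≠ w → p u / p w * T w < T u} := by
      ext T
      simp only [Wins, Set.mem_ofPred_eq, h0, true_and]
      refine and_congr_right fun _ => forall_congr' fun u => imp_congr_right fun _ => ?_
      rw [div_mul_eq_mul_div, div_lt_iff₀ h0, mul_comm]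
    rw [this, race_real_first w _ fun u => div_nonneg (hp u) h0.le,
      sum_ne_eq w fun u => p u / p w, ← Finset.sum_div, hp1]
    field_simp
    ring

/-- Matching lemma: two races run on the same clocks with speeds `p` and `q` have the common
winner `w` with probability at least half the harmonic mean of `p w` and `q w`. Run each
other clock `u` at relative speed `max (p u / p w) (q u / q w)`: if `w` still rings first, it wins
both races, and the speeds, including `1` for `w`, add up to at most `1 / p w + 1 / q w`. -/
lemma le_race_real_wins_inter {p q : Ω → ℝ} (hp : ∀ u, 0 ≤ p u) (hp1 : ∑ u, p u = 1)
    (hq : ∀ u, 0 ≤ q u) (hq1 : ∑ u, q u = 1) (w : Ω) :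
    p w * q w / (p w + q w) ≤ (race Ω).real (Wins p w ∩ Wins q w) := by
  rcases (hp w).eq_or_lt with h0 | h0
  · simp [← h0]
  rcases (hq w).eq_or_lt with k0 | k0
  · simp [← k0]
  have hc : ∀ u, 0 ≤ max (p u / p w) (q u / q w) := fun u =>
    le_max_of_le_left (div_nonneg (hp u) h0.le)
  have hsub : {T | 0 < T w ∧ ∀ u, u ≠ w → max (p u / p w) (q u / q w) * T w < T u} ⊆
      Wins p w ∩ Wins q w := by
    rintro T ⟨hT, h⟩
    refine ⟨⟨h0, hT, fun u hu => ?_⟩, ⟨k0, hT, fun u hu => ?_⟩⟩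
    · have := (mul_le_mul_of_nonneg_right (le_max_left (p u / p w) (q u / q w)) hT.le).trans_lt
        (h u hu)
      rwa [div_mul_eq_mul_div, div_lt_iff₀ h0, mul_comm] at this
    · have := (mul_le_mul_of_nonneg_right (le_max_right (p u / p w) (q u / q w)) hT.le).trans_lt
        (h u hu)
      rwa [div_mul_eq_mul_div, div_lt_iff₀ k0, mul_comm] at this
  refine le_trans ?_ (measureReal_mono hsub)
  rw [race_real_first w _ hc, sum_ne_eq w fun u => max (p u / p w) (q u / q w),
    div_self h0.ne', div_self k0.ne', max_self]
  have hsum : ∑ u, max (p u / p w) (q u / q w) ≤ 1 / p w + 1 / q w := by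
    calc _ ≤ ∑ u, (p u / p w + q u / q w) := Finset.sum_le_sum fun u _ =>
          max_le_add_of_nonneg (div_nonneg (hp u) h0.le) (div_nonneg (hq u) k0.le)
      _ = _ := by rw [Finset.sum_add_distrib, ← Finset.sum_div, ← Finset.sum_div, hp1, hq1]
  have hone : 1 ≤ ∑ u, max (p u / p w) (q u / q w) := by
    have := Finset.single_le_sum (fun u _ => hc u) (Finset.mem_univ w)
    simpa [div_self h0.ne', div_self k0.ne'] using this
  have : p w * q w / (p w + q w) = (1 / p w + 1 / q w)⁻¹ := by field_simp; ring
  rw [this]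
  exact inv_anti₀ (by linarith) (by linarith)

/-! ### The one-shot code -/

/-- The winner of the race with speeds `p` at clock times `T`, an arbitrary point if there is
none. -/
noncomputable def winner {Ω : Type*} [Nonempty Ω] (p : Ω → ℝ) (T : Ω → ℝ) : Ω :=
  open Classical in if h : ∃ w, T ∈ Wins p w then h.choose else Classical.arbitrary Ω

lemma winner_eq {Ω : Type*} [Nonempty Ω] {p : Ω → ℝ} {T : Ω → ℝ} {w : Ω} (h : T ∈ Wins p w) :
    winner p T = w := by
  have h' : ∃ w, T ∈ Wins p w := ⟨w, h⟩
  rw [winner, dif_pos h']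
  exact Wins.unique h'.choose_spec h

open Classical in
/-- For one pair `(x, z)` and one clock realisation `T`: the encoder picks the winner of the race
`p`, the decoder the winner of the race `q w`, which depends on the encoder's choice `w` (through
its label). The distortion `δ` at the decoder's choice is at most that at the encoder's choice, plus
`B` unless the two choices agree. -/
lemma pointwise_bound {Ω : Type*} [Fintype Ω] [Nonempty Ω] (p : Ω → ℝ) (q : Ω → Ω → ℝ)
    (δ : Ω → ℝ) (B : ℝ) (hδ : ∀ w, 0 ≤ δ w) (hB : ∀ w, δ w ≤ B) (T : Ω → ℝ) :
    δ (winner (q (winner p T)) T) ≤ ∑ w, (Wins p w).indicator 1 T * δ w +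
      B * (1 - ∑ w, (Wins p w ∩ Wins (q w) w).indicator 1 T) := by
  have hnn : ∀ w ∈ Finset.univ, 0 ≤ (Wins p w).indicator (1 : (Ω → ℝ) → ℝ) T * δ w := fun w _ =>
    mul_nonneg (Set.indicator_nonneg (fun _ _ => zero_le_one) _) (hδ w)
  by_cases h : ∃ w, T ∈ Wins p w ∩ Wins (q w) w
  · obtain ⟨w, hw⟩ := h
    have h1 : ∑ w, (Wins p w ∩ Wins (q w) w).indicator (1 : (Ω → ℝ) → ℝ) T = 1 := by
      rw [Finset.sum_eq_single w]
      · rw [Set.indicator_of_mem hw, Pi.one_apply]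
      · intro u _ hu
        exact Set.indicator_of_notMem (fun h => hu (Wins.unique h.1 hw.1)) _
      · simp
    have h2 := Finset.single_le_sum hnn (Finset.mem_univ w)
    rw [Set.indicator_of_mem hw.1, Pi.one_apply, one_mul] at h2
    rw [winner_eq hw.1, winner_eq hw.2, h1]
    linarith
  · have h1 : ∑ w, (Wins p w ∩ Wins (q w) w).indicator (1 : (Ω → ℝ) → ℝ) T = 0 :=
      Finset.sum_eq_zero fun w _ => Set.indicator_of_notMem (fun hw => h ⟨w, hw⟩) _
    rw [h1]
    have := Finset.sum_nonneg hnn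
    linarith [hB (winner (q (winner p T)) T)]

lemma integrable_ind {Ω : Type*} [Fintype Ω] {s : Set (Ω → ℝ)} (hs : MeasurableSet s) :
    Integrable (s.indicator (1 : (Ω → ℝ) → ℝ)) (race Ω) :=
  (integrable_const (1 : ℝ)).indicator hs

open Classical in
/-- One-shot Wyner–Ziv bound. The message `m` is a uniform label carried by each candidate
`(u, m)`; the encoder runs a race with speeds `W x u / L`, the decoder a race with speeds `Q z u`
restricted to the candidates carrying the received label. -/
lemma oneshot {X Z U Y : Type*} [Fintype X] [Fintype Z] [Fintype U] [Nonempty U]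
    (P : X → Z → ℝ) (hP : ∀ x z, 0 ≤ P x z)
    (W : X → U → ℝ) (hW0 : ∀ x u, 0 ≤ W x u) (hW1 : ∀ x, ∑ u, W x u = 1)
    (Q : Z → U → ℝ) (hQ0 : ∀ z u, 0 ≤ Q z u) (hQ1 : ∀ z, ∑ u, Q z u = 1)
    (φ : U → Z → Y) (d : X → Y → ℝ) (B : ℝ) (hd : ∀ x y, 0 ≤ d x y) (hdB : ∀ x y, d x y ≤ B)
    (hB0 : 0 ≤ B) (L : ℕ) (hL : 0 < L) :
    ∃ (f : X → Fin L) (g : Fin L → Z → Y), ∑ x, ∑ z, P x z * d x (g (f x) z) ≤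
      ∑ x, ∑ z, P x z * (∑ u, W x u * d x (φ u z) +
        B * ∑ u, W x u * (W x u / (W x u + L * Q z u))) := by
  have : Nonempty (Fin L) := ⟨⟨0, hL⟩⟩
  have hL' : (0 : ℝ) < L := by exact_mod_cast hL
  -- speeds of the encoder's and the decoder's race; the latter uses only the label of `w`
  let p : X → U × Fin L → ℝ := fun x w => W x w.1 / L
  let q : Z → U × Fin L → U × Fin L → ℝ := fun z w w' => if w'.2 = w.2 then Q z w'.1 else 0
  have hp0 : ∀ x w, 0 ≤ p x w := fun x w => div_nonneg (hW0 _ _) hL'.le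
  have hp1 : ∀ x, ∑ w, p x w = 1 := fun x => by
    simp only [p, Fintype.sum_prod_type, Finset.sum_const, Finset.card_univ, Fintype.card_fin,
      nsmul_eq_mul, mul_div_cancel₀ _ hL'.ne', hW1]
  have hq0 : ∀ z w w', 0 ≤ q z w w' := fun z w w' => by
    simp only [q]; split_ifs; exacts [hQ0 _ _, le_rfl]
  have hq1 : ∀ z w, ∑ w', q z w w' = 1 := fun z w => by
    simp [q, Fintype.sum_prod_type, hQ1]
  let F : (U × Fin L → ℝ) → ℝ := fun T => ∑ x, ∑ z, P x z *
    (∑ w, (Wins (p x) w).indicator 1 T * d x (φ w.1 z) +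
      B * (1 - ∑ w, (Wins (p x) w ∩ Wins (q z w) w).indicator 1 T))
  have hI1 : ∀ x w, Integrable ((Wins (p x) w).indicator (1 : (U × Fin L → ℝ) → ℝ))
      (race (U × Fin L)) :=
    fun x w => integrable_ind (measurableSet_wins _ _)
  have hI2 : ∀ x z w, Integrable
      ((Wins (p x) w ∩ Wins (q z w) w).indicator (1 : (U × Fin L → ℝ) → ℝ)) (race (U × Fin L)) :=
    fun x z w => integrable_ind ((measurableSet_wins _ _).inter (measurableSet_wins _ _))
  have hJ1 : ∀ x z, Integrable (fun T => ∑ w, (Wins (p x) w).indicator 1 T * d x (φ w.1 z))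
      (race (U × Fin L)) :=
    fun x z => integrable_finsetSum _ fun w _ => (hI1 x w).mul_const _
  have hJ2' : ∀ x z, Integrable (fun T => ∑ w, (Wins (p x) w ∩ Wins (q z w) w).indicator
      (1 : (U × Fin L → ℝ) → ℝ) T) (race (U × Fin L)) :=
    fun x z => integrable_finsetSum _ fun w _ => hI2 x z w
  have hJ2 : ∀ x z, Integrable (fun T => 1 - ∑ w, (Wins (p x) w ∩ Wins (q z w) w).indicator
      (1 : (U × Fin L → ℝ) → ℝ) T) (race (U × Fin L)) :=
    fun x z => (integrable_const _).sub (hJ2' x z)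
  have hJ : ∀ x z, Integrable (fun T => P x z *
      (∑ w, (Wins (p x) w).indicator 1 T * d x (φ w.1 z) +
      B * (1 - ∑ w, (Wins (p x) w ∩ Wins (q z w) w).indicator 1 T))) (race (U × Fin L)) :=
    fun x z => ((hJ1 x z).add ((hJ2 x z).const_mul B)).const_mul _
  have hF : Integrable F (race (U × Fin L)) :=
    integrable_finsetSum _ fun x _ => integrable_finsetSum _ fun z _ => hJ x z
  -- derandomisation: some clock realisation does at least as well as the average
  obtain ⟨T, hT⟩ := exists_le_integral hF
  refine ⟨fun x => (winner (p x) T).2, fun m z =>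
    φ (winner (fun w' => if w'.2 = m then Q z w'.1 else 0) T).1 z, le_trans ?_ (hT.trans ?_)⟩
  · refine Finset.sum_le_sum fun x _ => Finset.sum_le_sum fun z _ =>
      mul_le_mul_of_nonneg_left ?_ (hP x z)
    exact pointwise_bound (p x) (q z) (fun w => d x (φ w.1 z)) B (fun _ => hd _ _)
      (fun _ => hdB _ _) T
  · rw [integral_finsetSum _ fun x _ => integrable_finsetSum _ fun z _ => hJ x z]
    refine Finset.sum_le_sum fun x _ => ?_
    rw [integral_finsetSum _ fun z _ => hJ x z]
    refine Finset.sum_le_sum fun z _ => ?_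
    rw [integral_const_mul, integral_add (hJ1 x z) ((hJ2 x z).const_mul B), integral_const_mul,
      integral_sub (integrable_const _) (hJ2' x z), integral_finsetSum _ fun w _ => hI2 x z w,
      integral_finsetSum _ fun w _ => (hI1 x w).mul_const _]
    simp_rw [integral_mul_const, integral_indicator_one (measurableSet_wins _ _),
      integral_indicator_one ((measurableSet_wins _ _).inter (measurableSet_wins _ _)),
      race_real_wins (hp0 _) (hp1 _)]
    refine mul_le_mul_of_nonneg_left (add_le_add ?_ (mul_le_mul_of_nonneg_left ?_ hB0)) (hP x z)
    · simp only [p, Fintype.sum_prod_type, Finset.sum_const, Finset.card_univ, Fintype.card_fin,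
        nsmul_eq_mul]
      refine le_of_eq (Finset.sum_congr rfl fun u _ => ?_)
      field_simp
    · -- the `L` equally likely labels of each `u` add up to `W * (L * Q) / (W + L * Q)`
      have h1 : ∑ u, W x u * (L * Q z u / (W x u + L * Q z u)) ≤
          ∑ w, (race (U × Fin L)).real (Wins (p x) w ∩ Wins (q z w) w) := by
        refine le_trans (le_of_eq ?_) (Finset.sum_le_sum fun w _ =>
          le_race_real_wins_inter (hp0 x) (hp1 x) (hq0 z w) (hq1 z w) w)
        simp only [p, q, if_true, Fintype.sum_prod_type, Finset.sum_const, Finset.card_univ,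
          Fintype.card_fin, nsmul_eq_mul]
        refine Finset.sum_congr rfl fun u _ => ?_
        have : W x u / L + Q z u = (W x u + L * Q z u) / L := by field_simp
        rw [this]
        field_simp
      have h2 : ∑ u, W x u * (L * Q z u / (W x u + L * Q z u)) +
          ∑ u, W x u * (W x u / (W x u + L * Q z u)) = 1 := by
        rw [← Finset.sum_add_distrib, ← hW1 x]
        refine Finset.sum_congr rfl fun u _ => ?_
        rcases (hW0 x u).eq_or_lt with h | h
        · simp [← h]
        · have : W x u + L * Q z u ≠ 0 := by
            have := hQ0 z u
            positivity
          field_simp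
          ring
      have h3 : ∫ _ : U × Fin L → ℝ, (1:ℝ) ∂race (U × Fin L) = 1 := by simp
      linarith

/-! ### Memoryless blocks -/

lemma sum_prod_eq {X Z V : Type*} [Fintype X] [Fintype Z] [Fintype V] (n : ℕ)
    (h : Fin n → X → Z → V → ℝ) :
    ∑ xs : Fin n → X, ∑ zs : Fin n → Z, ∑ vs : Fin n → V, ∏ t, h t (xs t) (zs t) (vs t) =
      ∏ t, ∑ x, ∑ z, ∑ v, h t x z v := by
  classical
  simp only [Finset.prod_univ_sum, Fintype.piFinset_univ]

/-- A moment generating function is `1` at `0` and its derivative there is the mean: a normalised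
weighted exponential sum whose exponent has negative mean is `< 1` at some small positive
parameter. -/
lemma exists_exp_sum_lt_one {A : Type*} [Fintype A] (μ κ : A → ℝ) (hμ : ∑ a, μ a = 1)
    (hκ : ∑ a, μ a * κ a < 0) :
    ∃ s : ℝ, 0 < s ∧ s ≤ 1 ∧ ∑ a, μ a * Real.exp (s * κ a) < 1 := by
  have hder : HasDerivAt (fun s : ℝ => ∑ a, μ a * Real.exp (s * κ a)) (∑ a, μ a * κ a) 0 := by
    refine HasDerivAt.fun_sum fun a _ => ?_
    have := (((hasDerivAt_id (0:ℝ)).mul_const (κ a)).exp).const_mul (μ a)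
    simpa using this
  have h1 := (hasDerivAt_iff_tendsto_slope.1 hder).eventually (eventually_lt_nhds hκ)
  have h2 : ∀ᶠ s in nhdsWithin (0:ℝ) (Set.Ioi 0), slope (fun s : ℝ => ∑ a, μ a *
      Real.exp (s * κ a)) 0 s < 0 :=
    h1.filter_mono (nhdsWithin_mono _ fun s hs => ne_of_gt hs)
  obtain ⟨s, hs, hs0, hs1⟩ := (h2.and (Ioc_mem_nhdsGT (zero_lt_one (α := ℝ)))).exists
  refine ⟨s, hs0, hs1, ?_⟩
  rw [slope_def_field, sub_zero, div_neg_iff] at hs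
  simp only [zero_mul, Real.exp_zero, mul_one, hμ] at hs
  rcases hs with hs | hs <;> linarith [hs.1, hs.2]

/-- With `K = log (w / (l * q))` and `L = l` this is `r / (1 + r) ≤ r ^ s` at `r = w / (l * q)`;
rounding the number of messages up to `L ≥ l` only decreases the left side. -/
lemma ratio_le_exp {w q l L K s : ℝ} (hq : 0 < q) (hl : 0 < l) (hL : l ≤ L)
    (hw : w = Real.exp K * (l * q)) (hs0 : 0 < s) (hs1 : s ≤ 1) :
    w / (w + L * q) ≤ Real.exp (s * K) := by
  have hlq : 0 < l * q := mul_pos hl hq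
  have hle : l * q ≤ L * q := mul_le_mul_of_nonneg_right hL hq.le
  have hw0 : 0 < w := by rw [hw]; positivity
  rcases le_or_gt 0 K with hK | hK
  · calc w / (w + L * q) ≤ 1 := (div_le_one (by linarith)).2 (by linarith)
      _ ≤ _ := Real.one_le_exp (by positivity)
  · calc w / (w + L * q) ≤ w / (l * q) := div_le_div_of_nonneg_left hw0.le hlq (by linarith)
      _ = Real.exp K := by rw [hw]; field_simp
      _ ≤ _ := Real.exp_le_exp.2 (by nlinarith)

/-- The error term of the one-shot bound for i.i.d. blocks with `L ≥ l ^ n` messages is at most the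
`n`-th power of a single-letter exponential moment of `κ = log (W / (l * Q))`. -/
lemma error_le {X Z V : Type*} [Fintype X] [Fintype Z] [Fintype V]
    (p : X → Z → ℝ) (hp : ∀ x z, 0 ≤ p x z) (W : X → V → ℝ) (hW : ∀ x v, 0 ≤ W x v)
    (Q : Z → V → ℝ) (hQ : ∀ x z v, p x z * W x v ≠ 0 → 0 < Q z v)
    (l : ℝ) (hl : 0 < l) (κ : X → Z → V → ℝ)
    (hκ : ∀ x z v, p x z * W x v ≠ 0 → W x v = Real.exp (κ x z v) * (l * Q z v))
    (s : ℝ) (hs0 : 0 < s) (hs1 : s ≤ 1) (n : ℕ) (L : ℝ) (hL : l ^ n ≤ L) :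
    ∑ xs : Fin n → X, ∑ zs : Fin n → Z, (∏ t, p (xs t) (zs t)) * ∑ vs : Fin n → V,
      (∏ t, W (xs t) (vs t)) * ((∏ t, W (xs t) (vs t)) /
        ((∏ t, W (xs t) (vs t)) + L * ∏ t, Q (zs t) (vs t))) ≤
      (∑ x, ∑ z, ∑ v, p x z * W x v * Real.exp (s * κ x z v)) ^ n := by
  have hpow : (∑ x, ∑ z, ∑ v, p x z * W x v * Real.exp (s * κ x z v)) ^ n =
      ∏ _t : Fin n, ∑ x, ∑ z, ∑ v, p x z * W x v * Real.exp (s * κ x z v) := by simp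
  rw [hpow, ← sum_prod_eq n fun _ x z v => p x z * W x v * Real.exp (s * κ x z v)]
  refine Finset.sum_le_sum fun xs _ => Finset.sum_le_sum fun zs _ => ?_
  rw [Finset.mul_sum]
  refine Finset.sum_le_sum fun vs _ => ?_
  rw [← mul_assoc, ← Finset.prod_mul_distrib, Finset.prod_mul_distrib
    (f := fun t => p (xs t) (zs t) * W (xs t) (vs t))]
  by_cases h0 : ∃ t, p (xs t) (zs t) * W (xs t) (vs t) = 0
  · obtain ⟨t, ht⟩ := h0
    rw [Finset.prod_eq_zero (Finset.mem_univ t) ht, zero_mul, zero_mul]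
  · push Not at h0
    refine mul_le_mul_of_nonneg_left ?_
      (Finset.prod_nonneg fun t _ => mul_nonneg (hp _ _) (hW _ _))
    rw [← Real.exp_sum, ← Finset.mul_sum]
    refine ratio_le_exp (l := l ^ n) (Finset.prod_pos fun t _ => hQ _ _ _ (h0 t)) (by positivity)
      hL ?_ hs0 hs1
    rw [Finset.prod_congr rfl fun t _ => hκ _ _ _ (h0 t), Finset.prod_mul_distrib,
      Finset.prod_mul_distrib, Real.exp_sum]
    simp

/-- The mean of a time average under an i.i.d. law is the single-letter mean. -/
lemma mean_avg {X Z V : Type*} [Fintype X] [Fintype Z] [Fintype V]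
    (p : X → Z → ℝ) (W : X → V → ℝ) (h1 : ∑ x, ∑ z, ∑ v, p x z * W x v = 1)
    (δ : X → Z → V → ℝ) (n : ℕ) (hn : n ≠ 0) :
    ∑ xs : Fin n → X, ∑ zs : Fin n → Z, (∏ t, p (xs t) (zs t)) * ∑ vs : Fin n → V,
      (∏ t, W (xs t) (vs t)) * ((n : ℝ)⁻¹ * ∑ t, δ (xs t) (zs t) (vs t)) =
      ∑ x, ∑ z, ∑ v, p x z * W x v * δ x z v := by
  have key : ∀ t₀ : Fin n, ∑ xs : Fin n → X, ∑ zs : Fin n → Z, ∑ vs : Fin n → V,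
      (∏ t, p (xs t) (zs t) * W (xs t) (vs t)) * δ (xs t₀) (zs t₀) (vs t₀) =
      ∑ x, ∑ z, ∑ v, p x z * W x v * δ x z v := by
    intro t₀
    -- absorb the single factor `δ` at time `t₀` into the product over all times
    have h := sum_prod_eq n fun t x z v => p x z * W x v * if t = t₀ then δ x z v else 1
    rw [Finset.prod_eq_single t₀] at h
    · simp only [Finset.prod_mul_distrib, Finset.prod_ite_eq', Finset.mem_univ, if_true] at h ⊢
      exact h
    · intro t _ ht
      simpa [ht] using h1
    · simp
  have hn' : (n : ℝ) ≠ 0 := by exact_mod_cast hn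
  calc _ = ∑ xs : Fin n → X, ∑ zs : Fin n → Z, ∑ vs : Fin n → V, ∑ t₀ : Fin n, (n : ℝ)⁻¹ *
        ((∏ t, p (xs t) (zs t) * W (xs t) (vs t)) * δ (xs t₀) (zs t₀) (vs t₀)) := by
        refine Finset.sum_congr rfl fun xs _ => Finset.sum_congr rfl fun zs _ => ?_
        rw [Finset.mul_sum]
        refine Finset.sum_congr rfl fun vs _ => ?_
        rw [← Finset.mul_sum, ← Finset.mul_sum, Finset.prod_mul_distrib]
        ring
    _ = ∑ t₀ : Fin n, (n : ℝ)⁻¹ * ∑ xs : Fin n → X, ∑ zs : Fin n → Z, ∑ vs : Fin n → V,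
        ((∏ t, p (xs t) (zs t) * W (xs t) (vs t)) * δ (xs t₀) (zs t₀) (vs t₀)) := by
        simp_rw [Finset.mul_sum]
        rw [eq_comm, Finset.sum_comm]
        refine Finset.sum_congr rfl fun xs _ => ?_
        rw [Finset.sum_comm]
        refine Finset.sum_congr rfl fun zs _ => ?_
        rw [Finset.sum_comm]
    _ = _ := by
        simp_rw [key]
        simp [hn']

end WynerZiv
/-! ### Achievability -/

/-- Achievability part of the Wyner–Ziv theorem: for an i.i.d. source/side-information
pair `(X^n,Z^n) ~ ∏ P_{XZ}`, a conditional pmf `P̄_{V|X} = W` (so `V − X − Z`), and a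
reconstruction function `φ` with `E_{P̄}[d(X,φ(V,Z))] ≤ D`, if `R > I_{P̄}(X;V|Z)` then
there exist rate-`R` stochastic encoders (of `X^n`) and decoders (of the message and
`Z^n`) such that `limsup_n E[d(X^n,Y^n)] ≤ D`. -/
theorem stmt12 {X Z V YT : Type} [Fintype X] [Fintype Z] [Fintype V] [Fintype YT]
    [Nonempty X] [Nonempty Z] [Nonempty V] [Nonempty YT]
    (pXZ : X → Z → ℝ) (h0 : ∀ x z, 0 ≤ pXZ x z) (h1 : ∑ x, ∑ z, pXZ x z = 1)
    (W : X → V → ℝ) (hW0 : ∀ x v, 0 ≤ W x v) (hW1 : ∀ x, ∑ v, W x v = 1)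
    (d : X → YT → ℝ) (hd : ∀ x y, 0 ≤ d x y)
    (φ : V → Z → YT) (R D : ℝ)
    (hD : (∑ x, ∑ z, ∑ v, pXZ x z * W x v * d x (φ v z)) ≤ D)
    (hR : R > ∑ x, ∑ z, ∑ v, pXZ x z * W x v *
      Real.logb 2 ((pXZ x z * W x v * (∑ x', ∑ v', pXZ x' z * W x' v')) /
        ((∑ v', pXZ x z * W x v') * (∑ x', pXZ x' z * W x' v)))) :
    ∃ (enc : (n : ℕ) → (Fin n → X) → Fin (Nat.ceil ((2:ℝ) ^ ((n:ℝ) * R))) → ℝ)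
      (dec : (n : ℕ) → Fin (Nat.ceil ((2:ℝ) ^ ((n:ℝ) * R))) →
        (Fin n → Z) → (Fin n → YT) → ℝ),
      (∀ n xs, (∀ m, 0 ≤ enc n xs m) ∧ ∑ m, enc n xs m = 1) ∧
      (∀ n m zs, (∀ ys, 0 ≤ dec n m zs ys) ∧ ∑ ys, dec n m zs ys = 1) ∧
      Filter.limsup (fun n : ℕ =>
        ∑ xs : Fin n → X, ∑ zs : Fin n → Z, ∑ ys : Fin n → YT,
          (∏ t, pXZ (xs t) (zs t)) * (∑ m, enc n xs m * dec n m zs ys) *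
          ((n : ℝ)⁻¹ * ∑ t, d (xs t) (ys t))) atTop ≤ D := by
  classical
  -- the single-letter decoder law `P_{V|Z}`, uniform where `P_Z` vanishes
  set N : Z → V → ℝ := fun z v => ∑ x', pXZ x' z * W x' v with hN
  set M : Z → ℝ := fun z => ∑ x', ∑ v', pXZ x' z * W x' v' with hM
  have hN0 : ∀ z v, 0 ≤ N z v := fun z v =>
    Finset.sum_nonneg fun x _ => mul_nonneg (h0 _ _) (hW0 _ _)
  have hMN : ∀ z, ∑ v, N z v = M z := fun z => Finset.sum_comm
  have hM0 : ∀ z, 0 ≤ M z := fun z => hMN z ▸ Finset.sum_nonneg fun v _ => hN0 z v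
  let Q : Z → V → ℝ := fun z v => if M z = 0 then (Fintype.card V : ℝ)⁻¹ else N z v / M z
  have hQ0 : ∀ z v, 0 ≤ Q z v := fun z v => by
    simp only [Q]
    split_ifs
    · positivity
    · exact div_nonneg (hN0 _ _) (hM0 _)
  have hQ1 : ∀ z, ∑ v, Q z v = 1 := fun z => by
    simp only [Q]
    split_ifs with h
    · simp
    · rw [← Finset.sum_div, hMN, div_self h]
  -- the information density minus the rate, in nats
  let κ : X → Z → V → ℝ := fun x z v => Real.log 2 * (Real.logb 2 ((pXZ x z * W x v * M z) /
    ((∑ v', pXZ x z * W x v') * N z v)) - R)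
  have hl2 : 0 < Real.log 2 := Real.log_pos one_lt_two
  have hmass : ∑ x, ∑ z, ∑ v, pXZ x z * W x v = 1 := by
    simp_rw [← Finset.mul_sum, hW1, mul_one, h1]
  have hNpos : ∀ x z v, pXZ x z * W x v ≠ 0 → 0 < N z v := fun x z v h =>
    ((mul_nonneg (h0 x z) (hW0 x v)).lt_of_ne' h).trans_le
      (Finset.single_le_sum (f := fun x' => pXZ x' z * W x' v)
        (fun x _ => mul_nonneg (h0 _ _) (hW0 _ _)) (Finset.mem_univ x))
  have hMpos : ∀ x z v, pXZ x z * W x v ≠ 0 → 0 < M z := fun x z v h =>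
    (hNpos x z v h).trans_le
      (hMN z ▸ Finset.single_le_sum (fun v _ => hN0 z v) (Finset.mem_univ v))
  have hQpos : ∀ x z v, pXZ x z * W x v ≠ 0 → 0 < Q z v := fun x z v h => by
    simp only [Q, if_neg (hMpos x z v h).ne']
    exact div_pos (hNpos x z v h) (hMpos x z v h)
  have hl : (0 : ℝ) < (2 : ℝ) ^ R := by positivity
  have hκ : ∀ x z v, pXZ x z * W x v ≠ 0 →
      W x v = Real.exp (κ x z v) * ((2 : ℝ) ^ R * Q z v) := fun x z v h => by
    have hNp := hNpos x z v h
    have hMp := hMpos x z v h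
    have hp : 0 < pXZ x z := (h0 x z).lt_of_ne' (left_ne_zero_of_mul h)
    have hw : 0 < W x v := (hW0 x v).lt_of_ne' (right_ne_zero_of_mul h)
    simp only [Q, κ, if_neg hMp.ne', ← Finset.mul_sum, hW1, mul_one]
    rw [mul_sub, Real.exp_sub, mul_comm (Real.log 2) (Real.logb 2 _), mul_comm (Real.log 2) R,
      Real.logb, div_mul_cancel₀ _ hl2.ne', Real.exp_log (by positivity),
      Real.rpow_def_of_pos two_pos, mul_comm R]
    field_simp
  have hκneg : ∑ x, ∑ z, ∑ v, pXZ x z * W x v * κ x z v < 0 := by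
    have : ∑ x, ∑ z, ∑ v, pXZ x z * W x v * κ x z v = Real.log 2 *
        (∑ x, ∑ z, ∑ v, pXZ x z * W x v * Real.logb 2 ((pXZ x z * W x v * M z) /
          ((∑ v', pXZ x z * W x v') * N z v)) - R * ∑ x, ∑ z, ∑ v, pXZ x z * W x v) := by
      simp only [κ, Finset.mul_sum, ← Finset.sum_sub_distrib]
      refine Finset.sum_congr rfl fun x _ => Finset.sum_congr rfl fun z _ =>
        Finset.sum_congr rfl fun v _ => ?_
      ring
    rw [this, hmass, mul_one]
    exact mul_neg_of_pos_of_neg hl2 (sub_neg.2 hR)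
  obtain ⟨s, hs0, hs1, hs⟩ := WynerZiv.exists_exp_sum_lt_one
    (fun a : X × Z × V => pXZ a.1 a.2.1 * W a.1 a.2.2) (fun a => κ a.1 a.2.1 a.2.2)
    (by simpa only [Fintype.sum_prod_type] using hmass)
    (by simpa only [Fintype.sum_prod_type] using hκneg)
  simp only [Fintype.sum_prod_type] at hs
  set θ : ℝ := ∑ x, ∑ z, ∑ v, pXZ x z * W x v * Real.exp (s * κ x z v) with hθ
  have hθ0 : 0 ≤ θ := Finset.sum_nonneg fun x _ => Finset.sum_nonneg fun z _ =>
    Finset.sum_nonneg fun v _ => mul_nonneg (mul_nonneg (h0 _ _) (hW0 _ _)) (Real.exp_pos _).le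
  set B : ℝ := ∑ x, ∑ y, d x y with hB
  have hdB : ∀ x y, d x y ≤ B := fun x y =>
    (Finset.single_le_sum (fun y _ => hd x y) (Finset.mem_univ y)).trans
      (Finset.single_le_sum (f := fun x => ∑ y, d x y)
        (fun x _ => Finset.sum_nonneg fun y _ => hd x y) (Finset.mem_univ x))
  have hB0 : 0 ≤ B := Finset.sum_nonneg fun x _ => Finset.sum_nonneg fun y _ => hd x y
  -- the per-letter distortion on blocks
  let dn : (n : ℕ) → (Fin n → X) → (Fin n → YT) → ℝ := fun n xs ys =>
    (n : ℝ)⁻¹ * ∑ t, d (xs t) (ys t)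
  have hdn0 : ∀ n xs ys, 0 ≤ dn n xs ys := fun n xs ys =>
    mul_nonneg (by positivity) (Finset.sum_nonneg fun t _ => hd _ _)
  have hdnB : ∀ n xs ys, dn n xs ys ≤ B := fun n xs ys => by
    have h : ∑ t, d (xs t) (ys t) ≤ n * B := by
      simpa using Finset.sum_le_sum fun t (_ : t ∈ Finset.univ) => hdB (xs t) (ys t)
    rcases Nat.eq_zero_or_pos n with rfl | hn
    · simpa [dn] using hB0
    · have hn' : (0 : ℝ) < n := by exact_mod_cast hn
      calc dn n xs ys ≤ (n : ℝ)⁻¹ * (n * B) := mul_le_mul_of_nonneg_left h (by positivity)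
        _ = B := by field_simp
  have hcode := fun n : ℕ => WynerZiv.oneshot
    (fun (xs : Fin n → X) (zs : Fin n → Z) => ∏ t, pXZ (xs t) (zs t))
    (fun _ _ => Finset.prod_nonneg fun _ _ => h0 _ _)
    (fun xs (vs : Fin n → V) => ∏ t, W (xs t) (vs t))
    (fun _ _ => Finset.prod_nonneg fun _ _ => hW0 _ _)
    (fun xs => by
      rw [← Fintype.piFinset_univ, ← Finset.prod_univ_sum]
      simp [hW1])
    (fun zs vs => ∏ t, Q (zs t) (vs t))
    (fun _ _ => Finset.prod_nonneg fun _ _ => hQ0 _ _)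
    (fun zs => by
      rw [← Fintype.piFinset_univ, ← Finset.prod_univ_sum]
      simp [hQ1])
    (fun vs zs t => φ (vs t) (zs t)) (dn n) B (hdn0 n) (hdnB n) hB0
    (Nat.ceil ((2:ℝ) ^ ((n:ℝ) * R))) (Nat.ceil_pos.2 (by positivity))
  choose f g hfg using hcode
  refine ⟨fun n xs m => if m = f n xs then 1 else 0,
    fun n m zs ys => if ys = g n m zs then 1 else 0, fun n xs => ⟨fun m => ?_, by simp⟩,
    fun n m zs => ⟨fun ys => ?_, by simp⟩, ?_⟩
  · positivity
  · positivity
  have hval : ∀ n : ℕ, (∑ xs : Fin n → X, ∑ zs : Fin n → Z, ∑ ys : Fin n → YT,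
      (∏ t, pXZ (xs t) (zs t)) * (∑ m, (if m = f n xs then (1:ℝ) else 0) *
        (if ys = g n m zs then 1 else 0)) * ((n : ℝ)⁻¹ * ∑ t, d (xs t) (ys t))) =
      ∑ xs : Fin n → X, ∑ zs : Fin n → Z, (∏ t, pXZ (xs t) (zs t)) *
        dn n xs (g n (f n xs) zs) := fun n => by
    refine Finset.sum_congr rfl fun xs _ => Finset.sum_congr rfl fun zs _ => ?_
    have hm : ∀ ys : Fin n → YT, (∑ m, (if m = f n xs then (1:ℝ) else 0) *
        (if ys = g n m zs then 1 else 0)) = if ys = g n (f n xs) zs then 1 else 0 := fun ys => by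
      rw [Finset.sum_eq_single (f n xs) (fun m _ hm => by rw [if_neg hm, zero_mul]) (by simp),
        if_pos rfl, one_mul]
    simp only [hm]
    simp only [mul_ite, mul_one, mul_zero, ite_mul, zero_mul, Finset.sum_ite_eq',
      Finset.mem_univ, if_true, dn]
  simp_rw [hval]
  have hbound : ∀ n : ℕ, n ≠ 0 → ∑ xs : Fin n → X, ∑ zs : Fin n → Z,
      (∏ t, pXZ (xs t) (zs t)) * dn n xs (g n (f n xs) zs) ≤ D + B * θ ^ n := fun n hn => by
    refine (hfg n).trans ?_
    simp_rw [mul_add, Finset.sum_add_distrib, mul_left_comm _ B, ← Finset.mul_sum]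
    refine add_le_add ?_ (mul_le_mul_of_nonneg_left ?_ hB0)
    · exact (WynerZiv.mean_avg pXZ W hmass (fun x z v => d x (φ v z)) n hn).trans_le hD
    · refine WynerZiv.error_le pXZ h0 W hW0 Q hQpos _ hl κ hκ s hs0 hs1 n _ ?_
      rw [← Real.rpow_natCast, ← Real.rpow_mul two_pos.le, mul_comm R]
      exact Nat.le_ceil _
  have hlim : Tendsto (fun n : ℕ => D + B * θ ^ n) atTop (nhds D) := by
    simpa using ((tendsto_pow_atTop_nhds_zero_of_lt_one hθ0 hs).const_mul B).const_add D
  refine (limsup_le_limsup ((eventually_ne_atTop 0).mono hbound) ?_ hlim.isBoundedUnder_le).trans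
    hlim.limsup_eq.le
  refine IsBoundedUnder.isCoboundedUnder_le (isBoundedUnder_of ⟨0, fun n => ?_⟩)
  exact Finset.sum_nonneg fun xs _ => Finset.sum_nonneg fun zs _ =>
    mul_nonneg (Finset.prod_nonneg fun _ _ => h0 _ _) (hdn0 _ _ _)
end
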